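/- Let u be the restriction to [0,∞)² of a smooth compactly supported function on ℝ², and set f_*u(t) = ∫_0^∞ u(x, t/x) (1/x) dx for t > 0. For j ∈ ℕ₀ define a_j = −∫_0^∞ (ζ^{j−1}/j!) ∂_1^j u(0, 1/ζ) dζ, b_j = −∫_0^∞ (x^{−1−j}/j!) ∂_2^j u(x, 0) dx, and c_j = (1/(j!)²) ∂_1^j ∂_2^j u(0,0), where ∂_1, ∂_2 are the partial derivatives of u and −∫ denotes the regularized integral (each integrand lies in a class L_{p',q'} because u is smooth with compact support, so these are defined). Then f_*u has the complete asymptotic expansion f_*u(t) ∼ Σ_{j≥0} t^j ( a_j + b_j − c_j ln t ) as t → 0⁺; precisely, for every N ∈ ℕ there are C > 0 and t₀ ∈ (0,1) such that | f_*u(t) − Σ_{j=0}^{N−1} t^j ( a_j + b_j − c_j ln t ) | ≤ C t^N (1 + |ln t|) for all 0 < t < t₀. -/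

import Mathlib

open MeasureTheory Set Polynomial Filter
open scoped Topology Classical

noncomputable section

/-- `f` has a finite asymptotic expansion at `0` with exponents `α j`, coefficient
polynomials (in `log x`) `P j`, and remainder `x ^ p * f₁ x` with `f₁` locally
integrable on `[0,∞)`.  The real parts of the exponents are increasing and `≤ p - 1`,
the exponents are distinct and the coefficient polynomials are nontrivial. -/
def ExpandsAtZero (p : ℝ) (f : ℝ → ℂ) {N : ℕ} (α : Fin N → ℂ)
    (P : Fin N → Polynomial ℂ) : Prop :=
  Monotone (fun j => (α j).re) ∧ Function.Injective α ∧
  (∀ j, (α j).re ≤ p - 1) ∧ (∀ j, P j ≠ 0) ∧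
  ∃ f₁ : ℝ → ℂ, LocallyIntegrableOn f₁ (Ici 0) ∧
    ∀ x : ℝ, 0 < x →
      f x = (∑ j, (x : ℂ) ^ (α j) * (P j).eval ((Real.log x : ℝ) : ℂ)) + (x ^ p : ℝ) * f₁ x

/-- `f` has a finite asymptotic expansion at `∞` with exponents `β j`, coefficient
polynomials (in `log x`) `Q j`, and remainder `x ^ (-q) * f₂ x` with `f₂`
integrable on `[1,∞)`.  The real parts of the exponents are decreasing and `≥ -q - 1`,
the exponents are distinct and the coefficient polynomials are nontrivial. -/
def ExpandsAtInfty (q : ℝ) (f : ℝ → ℂ) {M : ℕ} (β : Fin M → ℂ)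
    (Q : Fin M → Polynomial ℂ) : Prop :=
  Antitone (fun j => (β j).re) ∧ Function.Injective β ∧
  (∀ j, -q - 1 ≤ (β j).re) ∧ (∀ j, Q j ≠ 0) ∧
  ∃ f₂ : ℝ → ℂ, IntegrableOn f₂ (Ici 1) ∧
    ∀ x : ℝ, 0 < x →
      f x = (∑ j, (x : ℂ) ^ (β j) * (Q j).eval ((Real.log x : ℝ) : ℂ)) + (x ^ (-q) : ℝ) * f₂ x

/-- The class `L_{p,q}((0,∞))` of Brüning–Seeley–Lesch. -/
def MemLpq (p q : ℝ) (f : ℝ → ℂ) : Prop :=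
  (∃ (N : ℕ) (α : Fin N → ℂ) (P : Fin N → Polynomial ℂ), ExpandsAtZero p f α P) ∧
  (∃ (M : ℕ) (β : Fin M → ℂ) (Q : Fin M → Polynomial ℂ), ExpandsAtInfty q f β Q)

/-- The coefficient polynomial attached to the exponent `c` in an expansion
(zero if `c` does not occur among the exponents). -/
def coeffPolyAt {N : ℕ} (c : ℂ) (α : Fin N → ℂ) (P : Fin N → Polynomial ℂ) : Polynomial ℂ :=
  ∑ j, if α j = c then P j else 0

/-- `L` is the limit in the mean of `f` at `0`: the constant coefficient of the
exponent-`0` coefficient polynomial in an expansion of `f` at `0` (for definiteness,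
an expansion with remainder exponent `p ≥ 1`, which makes this coefficient unique). -/
def IsLimZero (f : ℝ → ℂ) (L : ℂ) : Prop :=
  ∃ (p : ℝ) (N : ℕ) (α : Fin N → ℂ) (P : Fin N → Polynomial ℂ),
    1 ≤ p ∧ ExpandsAtZero p f α P ∧ (coeffPolyAt 0 α P).coeff 0 = L

/-- `L` is the limit in the mean of `f` at `∞`. -/
def IsLimInfty (f : ℝ → ℂ) (L : ℂ) : Prop :=
  ∃ (q : ℝ) (M : ℕ) (β : Fin M → ℂ) (Q : Fin M → Polynomial ℂ),
    0 < q ∧ ExpandsAtInfty q f β Q ∧ (coeffPolyAt 0 β Q).coeff 0 = L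

/-- `LIM_{x→0} f(x)` (junk value `0` if `f` has no admissible expansion at `0`). -/
def limZero (f : ℝ → ℂ) : ℂ := if h : ∃ L, IsLimZero f L then h.choose else 0

/-- `LIM_{x→∞} f(x)` (junk value `0` if `f` has no admissible expansion at `∞`). -/
def limInfty (f : ℝ → ℂ) : ℂ := if h : ∃ L, IsLimInfty f L then h.choose else 0

/-- `F(x) = ∫_1^x f(s) ds`. -/
def primitive (f : ℝ → ℂ) : ℝ → ℂ := fun x => ∫ s in (1:ℝ)..x, f s

/-- The regularized integral `⨍_0^∞ f(x) dx := LIM_{x→∞} F(x) - LIM_{x→0} F(x)`,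
where `F(x) = ∫_1^x f(s) ds`. -/
def regInt (f : ℝ → ℂ) : ℂ := limInfty (primitive f) - limZero (primitive f)

/-!
The proof is the hyperbola method. With `t = ε ^ 2`, the push-forward is the sum of the parts
`x > ε` and `y > ε` of the hyperbola `x * y = t`. On the first part `y = t / x ≤ ε` is small, and
expanding `u x y` in powers of `y` gives `∑ j, t ^ j * ∫ x in ε..R, x ^ (-1 - j) * g j x` with
`g j x` the `j`-th Taylor coefficient of `u x` at `0`. The integral over `ε..R` is the regularized
integral `b_j` minus the singular terms `e j k * ε ^ (k - j) / (k - j)`, or `e j j * log ε` for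
`k = j`, where `e j k` are the Taylor coefficients of `g j`. The second part is the same for the
transpose of `u`, whose coefficients are `e k j`. As `t ^ j * ε ^ (k - j)` is symmetric and `k - j`
is antisymmetric in `j` and `k`, the singular terms of the two parts cancel off the diagonal, and
on the diagonal they add up to `t ^ j * c_j * log t`.

`LIM` does not depend on the expansion: in the variable `log x`, an expansion is a sum of
exponential polynomials modulo functions integrable at infinity, and those with different exponents
lie in different generalized eigenspaces of a translation.
-/

open Asymptotics
open scoped ContDiff

section ExponentialPolynomials

/-- The functions on the line that are integrable near `+∞`, the error terms modulo which
expansions are determined. -/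
def integrableAtTop : Submodule ℂ (ℝ → ℂ) where
  carrier := {f | IntegrableAtFilter f atTop volume}
  zero_mem' := (integrable_zero ℝ ℂ volume).integrableAtFilter atTop
  add_mem' hf hg := hf.add hg
  smul_mem' c _ hf := hf.smul c

lemma mem_integrableAtTop_iff {f : ℝ → ℂ} :
    f ∈ integrableAtTop ↔ ∃ a, IntegrableOn f (Ici a) :=
  integrableAtFilter_atTop_iff

/-- The operator `f ↦ f (· + h)`. -/
def translation (h : ℝ) : Module.End ℂ (ℝ → ℂ) := LinearMap.funLeft ℂ ℂ (· + h)

lemma integrableAtTop_le_comap_translation (h : ℝ) :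
    integrableAtTop ≤ integrableAtTop.comap (translation h) := by
  intro f hf
  obtain ⟨a, ha⟩ := mem_integrableAtTop_iff.1 hf
  refine mem_integrableAtTop_iff.2 ⟨a - h, ?_⟩
  have hcomp := ((measurePreserving_add_right volume h).integrableOn_comp_preimage
    (measurableEmbedding_addRight h) (f := f) (s := Ici a)).2 ha
  simpa [translation, LinearMap.funLeft, Function.comp_def] using hcomp

/-- The exponential polynomial `s ↦ exp (c s) P(s)`, linear in `P`. It is what the term
`x ^ c * P (log x)` of an expansion becomes in the variable `s = log x`. -/
def expPoly (c : ℂ) : ℂ[X] →ₗ[ℂ] (ℝ → ℂ) where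
  toFun P s := Complex.exp (c * s) * P.eval (s : ℂ)
  map_add' P Q := by ext; simp [mul_add]
  map_smul' a P := by ext; simp [mul_left_comm]

lemma expPoly_apply (c : ℂ) (P : ℂ[X]) (s : ℝ) :
    expPoly c P s = Complex.exp (c * s) * P.eval (s : ℂ) :=
  rfl

lemma translation_sub_smul_expPoly (h : ℝ) (c : ℂ) (P : ℂ[X]) :
    (translation h - Complex.exp (c * h) • 1) (expPoly c P) =
      Complex.exp (c * h) • expPoly c (taylor (h : ℂ) P - P) := by
  ext s
  simp only [translation, LinearMap.sub_apply, LinearMap.smul_apply, Module.End.one_apply,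
    Pi.sub_apply, Pi.smul_apply, LinearMap.funLeft_apply, expPoly_apply, smul_eq_mul, taylor_eval,
    eval_sub, Complex.ofReal_add, mul_add, Complex.exp_add]
  ring

lemma degree_taylor_sub_self_lt {R : Type*} [CommRing R] {P : R[X]} (hP : P ≠ 0) (r : R) :
    (taylor r P - P).degree < P.degree := by
  simpa only [degree_taylor] using
    degree_sub_lt_left (degree_taylor P r) (by simpa using hP) (leadingCoeff_taylor r P)

lemma translation_sub_smul_pow_expPoly_eq_zero (h : ℝ) (c : ℂ) {n : ℕ} {P : ℂ[X]}
    (hP : P.degree < n) :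
    ((translation h - Complex.exp (c * h) • 1) ^ n) (expPoly c P) = 0 := by
  induction n generalizing P with
  | zero =>
    obtain rfl : P = 0 := by simpa [Nat.WithBot.lt_zero_iff] using hP
    simp
  | succ n ih =>
    obtain rfl | hP0 := eq_or_ne P 0
    · simp
    have hdeg : P.degree ≤ n := Order.lt_succ_iff.1 hP
    rw [pow_succ, Module.End.mul_apply, translation_sub_smul_expPoly, map_smul,
      ih ((degree_taylor_sub_self_lt hP0 _).trans_le hdeg), smul_zero]

lemma expPoly_mem_maxGenEigenspace (h : ℝ) (c : ℂ) (P : ℂ[X]) :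
    expPoly c P ∈ (translation h).maxGenEigenspace (Complex.exp (c * h)) :=
  (Module.End.mem_maxGenEigenspace _ _ _).2 ⟨P.natDegree + 1,
    translation_sub_smul_pow_expPoly_eq_zero h c
      (degree_le_natDegree.trans_lt (Nat.cast_lt.2 P.natDegree.lt_succ_self))⟩

lemma map_mem_maxGenEigenspace {R V W : Type*} [CommRing R] [AddCommGroup V] [Module R V]
    [AddCommGroup W] [Module R W] {f : Module.End R V} {g : Module.End R W} {π : V →ₗ[R] W}
    (hπ : g ∘ₗ π = π ∘ₗ f) {μ : R} {v : V} (hv : v ∈ f.maxGenEigenspace μ) :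
    π v ∈ g.maxGenEigenspace μ := by
  obtain ⟨k, hk⟩ := (Module.End.mem_maxGenEigenspace f μ v).1 hv
  have hcomm : (g - μ • 1) ∘ₗ π = π ∘ₗ (f - μ • 1) := by
    ext w
    simpa using LinearMap.congr_fun hπ w
  refine (Module.End.mem_maxGenEigenspace g μ _).2 ⟨k, ?_⟩
  calc ((g - μ • 1) ^ k) (π v) = π (((f - μ • 1) ^ k) v) :=
        LinearMap.congr_fun (Module.End.commute_pow_left_of_commute hcomm k) v
    _ = 0 := by rw [hk, map_zero]

lemma exists_pos_eventually_le_norm_eval {P : ℂ[X]} (hP : P ≠ 0) :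
    ∃ δ > 0, ∀ᶠ s : ℝ in atTop, δ ≤ ‖P.eval (s : ℂ)‖ := by
  by_cases hdeg : P.degree ≤ 0
  · rw [eq_C_of_degree_le_zero hdeg] at hP ⊢
    exact ⟨‖P.coeff 0‖, by simpa using hP, by simp⟩
  · have htend : Tendsto (fun s : ℝ => ‖P.eval (s : ℂ)‖) atTop atTop :=
      P.tendsto_norm_atTop (not_le.1 hdeg) (by simpa using tendsto_abs_atTop_atTop)
    exact ⟨1, one_pos, htend.eventually_ge_atTop 1⟩

lemma eq_zero_of_expPoly_mem_integrableAtTop {c : ℂ} (hc : 0 ≤ c.re) {P : ℂ[X]}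
    (hP : expPoly c P ∈ integrableAtTop) : P = 0 := by
  by_contra hP0
  obtain ⟨δ, hδ, hle⟩ := exists_pos_eventually_le_norm_eval hP0
  have hbound : ∀ᶠ s : ℝ in atTop, δ ≤ ‖expPoly c P s‖ := by
    filter_upwards [hle, eventually_ge_atTop 0] with s hs hs0
    have hexp : 1 ≤ Real.exp (c * s).re := Real.one_le_exp (by simpa using mul_nonneg hc hs0)
    rw [expPoly_apply, norm_mul, Complex.norm_exp]
    nlinarith
  obtain ⟨a, ha⟩ := mem_integrableAtTop_iff.1 hP
  obtain ⟨b, hb⟩ := eventually_atTop.1 hbound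
  have hconst : IntegrableOn (fun _ : ℝ => δ) (Ici (max a b)) := by
    refine Integrable.mono' (ha.mono_set (Ici_subset_Ici.2 (le_max_left a b))).norm
      aestronglyMeasurable_const ?_
    filter_upwards [ae_restrict_mem measurableSet_Ici] with s hs
    simpa only [Real.norm_of_nonneg hδ.le] using hb s ((le_max_right a b).trans hs)
  simp [integrableOn_const_iff, hδ.ne'] at hconst

lemma exists_injOn_exp_mul (S : Finset ℂ) :
    ∃ h : ℝ, InjOn (fun c : ℂ => Complex.exp (c * h)) S := by
  set B : ℝ := 1 + ∑ c ∈ S, ‖c‖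
  have hB : 0 < B := by positivity
  have him : ∀ c ∈ S, |(c * ((B⁻¹ : ℝ) : ℂ)).im| < Real.pi := by
    intro c hc
    have hcB : ‖c‖ ≤ B := by
      linarith [Finset.single_le_sum (f := fun c : ℂ => ‖c‖) (fun _ _ => norm_nonneg _) hc]
    calc |(c * ((B⁻¹ : ℝ) : ℂ)).im| ≤ ‖c * ((B⁻¹ : ℝ) : ℂ)‖ := Complex.abs_im_le_norm _
      _ = ‖c‖ * B⁻¹ := by rw [norm_mul, Complex.norm_real, Real.norm_of_nonneg (by positivity)]
      _ ≤ 1 := by rwa [← div_eq_mul_inv, div_le_one hB]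
      _ < Real.pi := by linarith [Real.pi_gt_three]
  refine ⟨B⁻¹, fun a ha b hb hab => ?_⟩
  refine mul_right_cancel₀ (Complex.ofReal_ne_zero.2 (inv_ne_zero hB.ne')) ?_
  exact Complex.exp_inj_of_neg_pi_lt_of_le_pi (abs_lt.1 (him a ha)).1 (abs_lt.1 (him a ha)).2.le
    (abs_lt.1 (him b hb)).1 (abs_lt.1 (him b hb)).2.le hab

-- For a generic `h` the terms lie in distinct generalized eigenspaces of the translation by `h`
-- acting on functions modulo those integrable at `+∞`, so each of them vanishes there.
theorem eq_zero_of_sum_expPoly_mem_integrableAtTop {S : Finset ℂ} {P : ℂ → ℂ[X]}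
    (hsum : ∑ c ∈ S, expPoly c (P c) ∈ integrableAtTop) {c : ℂ} (hcS : c ∈ S) (hc : 0 ≤ c.re) :
    P c = 0 := by
  obtain ⟨h, hinj⟩ := exists_injOn_exp_mul S
  let T : Module.End ℂ _ := integrableAtTop.mapQ integrableAtTop (translation h)
    (integrableAtTop_le_comap_translation h)
  let π := integrableAtTop.mkQ
  have hmem (c : ℂ) : π (expPoly c (P c)) ∈ T.maxGenEigenspace (Complex.exp (c * h)) :=
    map_mem_maxGenEigenspace (Submodule.mapQ_mkQ ..) (expPoly_mem_maxGenEigenspace h c (P c))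
  have hindep := T.independent_maxGenEigenspace.comp hinj.injective
  rw [iSupIndep_iff_finsetSum_eq_zero_imp_eq_zero] at hindep
  have hzero : ∑ c : S, π (expPoly c (P c)) = 0 := by
    rw [Finset.sum_coe_sort S fun c => π (expPoly c (P c)), ← map_sum]
    exact (Submodule.Quotient.mk_eq_zero _).2 hsum
  have hterm : π (expPoly c (P c)) = 0 :=
    hindep Finset.univ (fun c : S => π (expPoly c (P c))) (fun c _ => hmem c) hzero ⟨c, hcS⟩
      (Finset.mem_univ _)
  exact eq_zero_of_expPoly_mem_integrableAtTop hc ((Submodule.Quotient.mk_eq_zero _).1 hterm)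

end ExponentialPolynomials

section Uniqueness

variable {f : ℝ → ℂ} {N M M' : ℕ} {p q q' : ℝ} {α : Fin N → ℂ} {P : Fin N → ℂ[X]}
  {β : Fin M → ℂ} {Q : Fin M → ℂ[X]} {β' : Fin M' → ℂ} {Q' : Fin M' → ℂ[X]}

lemma sum_expPoly_coeffPolyAt {S : Finset ℂ} (hS : ∀ j, β j ∈ S) :
    ∑ c ∈ S, expPoly c (coeffPolyAt c β Q) = ∑ j, expPoly (β j) (Q j) := by
  simp only [coeffPolyAt, map_sum]
  rw [Finset.sum_comm]
  refine Finset.sum_congr rfl fun j _ => ?_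
  rw [Finset.sum_eq_single_of_mem (β j) (hS j) fun c _ hc => by simp [hc.symm], if_pos rfl]

lemma ofReal_exp_cpow (s : ℝ) (c : ℂ) : ((Real.exp s : ℝ) : ℂ) ^ c = Complex.exp (c * s) := by
  rw [Complex.cpow_def_of_ne_zero (Complex.ofReal_ne_zero.2 (Real.exp_pos s).ne'),
    ← Complex.ofReal_log (Real.exp_pos s).le, Real.log_exp, mul_comm]

lemma integrableOn_Ici_exp_mul_comp_exp {g : ℝ → ℂ} (hg : IntegrableOn g (Ici 1)) {r : ℝ}
    (hr : r ≤ 1) : IntegrableOn (fun s => (Real.exp (r * s) : ℂ) * g (Real.exp s)) (Ici 0) := by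
  have hsubst : IntegrableOn (fun s => (Real.exp s : ℂ) * g (Real.exp s)) (Ici 0) := by
    have himage : Real.exp '' Ici 0 ⊆ Ici 1 := image_subset_iff.2 fun s hs => Real.one_le_exp hs
    have hchange := (integrableOn_image_iff_integrableOn_abs_deriv_smul measurableSet_Ici
      (fun s _ => (Real.hasDerivAt_exp s).hasDerivWithinAt) Real.exp_injective.injOn g).1
      (hg.mono_set himage)
    simpa [abs_of_pos (Real.exp_pos _)] using hchange
  refine IntegrableOn.congr_fun (hsubst.bdd_mul (c := 1)
    (f := fun s : ℝ => (Real.exp ((r - 1) * s) : ℂ)) (by fun_prop) ?_) (fun s _ => ?_)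
    measurableSet_Ici
  · filter_upwards [ae_restrict_mem measurableSet_Ici] with s hs
    rw [Complex.norm_real, Real.norm_of_nonneg (Real.exp_pos _).le, Real.exp_le_one_iff]
    exact mul_nonpos_of_nonpos_of_nonneg (by linarith) hs
  · rw [← mul_assoc, ← Complex.ofReal_mul, ← Real.exp_add]
    ring_nf

lemma ExpandsAtInfty.comp_exp_sub_mem_integrableAtTop (h : ExpandsAtInfty q f β Q)
    (hq : -1 ≤ q) {S : Finset ℂ} (hS : ∀ j, β j ∈ S) :
    f ∘ Real.exp - ∑ c ∈ S, expPoly c (coeffPolyAt c β Q) ∈ integrableAtTop := by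
  obtain ⟨-, -, -, -, f₂, hf₂, hexpand⟩ := h
  refine mem_integrableAtTop_iff.2 ⟨0, (integrableOn_Ici_exp_mul_comp_exp hf₂
    (r := -q) (by linarith)).congr_fun (fun s _ => ?_) measurableSet_Ici⟩
  have hterms : ∑ j, ((Real.exp s : ℝ) : ℂ) ^ β j * (Q j).eval (Real.log (Real.exp s) : ℂ) =
      ∑ j, expPoly (β j) (Q j) s := by
    simp only [ofReal_exp_cpow, Real.log_exp, expPoly_apply]
  rw [sum_expPoly_coeffPolyAt hS, Pi.sub_apply, Finset.sum_apply, Function.comp_apply,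
    hexpand _ (Real.exp_pos s), hterms, add_sub_cancel_left, ← Real.exp_mul, mul_comm s]

theorem ExpandsAtInfty.coeffPolyAt_eq (h : ExpandsAtInfty q f β Q)
    (h' : ExpandsAtInfty q' f β' Q') (hq : -1 ≤ q) (hq' : -1 ≤ q') {c : ℂ} (hc : 0 ≤ c.re) :
    coeffPolyAt c β Q = coeffPolyAt c β' Q' := by
  let S : Finset ℂ := insert c (Finset.univ.image β ∪ Finset.univ.image β')
  have hsum : ∑ c ∈ S, expPoly c (coeffPolyAt c β Q - coeffPolyAt c β' Q') ∈ integrableAtTop := by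
    simpa only [sub_sub_sub_cancel_left, map_sub, Finset.sum_sub_distrib] using sub_mem
      (h'.comp_exp_sub_mem_integrableAtTop hq' (S := S) (by simp [S]))
      (h.comp_exp_sub_mem_integrableAtTop hq (S := S) (by simp [S]))
  exact sub_eq_zero.1 (eq_zero_of_sum_expPoly_mem_integrableAtTop
    (P := fun c => coeffPolyAt c β Q - coeffPolyAt c β' Q') hsum (by simp [S]) hc)

lemma integrableOn_Ici_rpow_neg_two_mul_comp_inv {g : ℝ → ℂ}
    (hg : LocallyIntegrableOn g (Ici 0)) :
    IntegrableOn (fun x => ((x ^ (-2 : ℝ) : ℝ) : ℂ) * g x⁻¹) (Ici 1) := by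
  have himage : (fun x : ℝ => x⁻¹) '' Ici 1 ⊆ Icc 0 1 :=
    image_subset_iff.2 fun x hx => ⟨inv_nonneg.2 (zero_le_one.trans hx), inv_le_one_of_one_le₀ hx⟩
  have hchange := (integrableOn_image_iff_integrableOn_abs_deriv_smul measurableSet_Ici
    (fun x hx => (hasDerivAt_inv (zero_lt_one.trans_le hx).ne').hasDerivWithinAt)
    inv_injective.injOn g).1
    ((hg.integrableOn_compact_subset Icc_subset_Ici_self isCompact_Icc).mono_set himage)
  refine hchange.congr_fun (fun x hx => ?_) measurableSet_Ici
  have hx0 : 0 ≤ x := zero_le_one.trans hx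
  simp [Real.rpow_neg hx0, abs_of_nonneg (inv_nonneg.2 (sq_nonneg x))]

theorem ExpandsAtZero.comp_inv (h : ExpandsAtZero p f α P) :
    ExpandsAtInfty (p - 2) (fun x => f x⁻¹) (fun j => -α j) (fun j => (P j).comp (-X)) := by
  obtain ⟨hmono, hinj, hre, hne, f₁, hf₁, hexpand⟩ := h
  refine ⟨fun i j hij => by simpa using hmono hij, neg_injective.comp hinj,
    fun j => by rw [Complex.neg_re]; linarith [hre j],
    fun j hj => hne j (by simpa using congrArg (·.comp (-X)) hj),
    fun x => ((x ^ (-2 : ℝ) : ℝ) : ℂ) * f₁ x⁻¹,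
    integrableOn_Ici_rpow_neg_two_mul_comp_inv hf₁, fun x hx => ?_⟩
  have hpow : (x⁻¹ : ℝ) ^ p = x ^ (-(p - 2)) * x ^ (-2 : ℝ) := by
    rw [← Real.rpow_add hx, Real.inv_rpow hx.le, ← Real.rpow_neg hx.le]
    ring_nf
  have hcpow (c : ℂ) : ((x⁻¹ : ℝ) : ℂ) ^ c = (x : ℂ) ^ (-c) := by
    have harg : (x : ℂ).arg ≠ Real.pi := by
      rw [Complex.arg_ofReal_of_nonneg hx.le]; exact Real.pi_ne_zero.symm
    rw [Complex.ofReal_inv, Complex.inv_cpow _ _ harg, Complex.cpow_neg]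
  simp only [hexpand _ (inv_pos.2 hx), hpow, hcpow, Real.log_inv, eval_comp, eval_neg,
    eval_X, Complex.ofReal_neg, Complex.ofReal_mul, mul_assoc]

lemma coeff_zero_coeffPolyAt_neg_comp_neg_X :
    (coeffPolyAt 0 (fun j => -α j) (fun j => (P j).comp (-X))).coeff 0 =
      (coeffPolyAt 0 α P).coeff 0 := by
  simp only [coeffPolyAt, finsetSum_coeff, neg_eq_zero]
  refine Finset.sum_congr rfl fun j _ => ?_
  split_ifs
  · simp [coeff_zero_eq_eval_zero]
  · rfl

variable {L L' : ℂ}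

theorem IsLimInfty.unique (h : IsLimInfty f L) (h' : IsLimInfty f L') : L = L' := by
  obtain ⟨q, M, β, Q, hq, hexpand, rfl⟩ := h
  obtain ⟨q', M', β', Q', hq', hexpand', rfl⟩ := h'
  rw [hexpand.coeffPolyAt_eq hexpand' (by linarith) (by linarith) (by simp)]

theorem IsLimZero.unique (h : IsLimZero f L) (h' : IsLimZero f L') : L = L' := by
  obtain ⟨p, N, α, P, hp, hexpand, rfl⟩ := h
  obtain ⟨p', N', α', P', hp', hexpand', rfl⟩ := h'
  rw [← coeff_zero_coeffPolyAt_neg_comp_neg_X, ← coeff_zero_coeffPolyAt_neg_comp_neg_X (α := α'),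
    hexpand.comp_inv.coeffPolyAt_eq hexpand'.comp_inv (by linarith) (by linarith) (by simp)]

lemma IsLimInfty.limInfty_eq (h : IsLimInfty f L) : limInfty f = L := by
  have hex : ∃ L, IsLimInfty f L := ⟨L, h⟩
  rw [limInfty, dif_pos hex]
  exact hex.choose_spec.unique h

lemma IsLimZero.limZero_eq (h : IsLimZero f L) : limZero f = L := by
  have hex : ∃ L, IsLimZero f L := ⟨L, h⟩
  rw [limZero, dif_pos hex]
  exact hex.choose_spec.unique h

end Uniqueness

section Construction

variable {f g : ℝ → ℂ} {P : ℤ →₀ ℂ[X]} {p : ℝ} {L : ℂ}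

lemma locallyIntegrableOn_Ici_of_isBigO_one (hcont : ContinuousOn g (Ioi 0))
    (hbdd : g =O[𝓝[>] 0] (fun _ => (1 : ℝ))) : LocallyIntegrableOn g (Ici 0) := by
  intro x hx
  obtain rfl | hx0 := (mem_Ici.1 hx).eq_or_lt
  · obtain ⟨s, hs, hgs⟩ : IntegrableAtFilter g (𝓝[>] 0) := hbdd.integrableAtFilter
      (hcont.stronglyMeasurableAtFilter_nhdsWithin measurableSet_Ioi 0)
      ((locallyIntegrable_const 1 0).filter_mono nhdsWithin_le_nhds)
    refine ⟨insert 0 s, ?_, (integrableOn_singleton (hx := by simp)).union hgs⟩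
    rw [← Ioi_insert, nhdsWithin_insert]
    exact mem_sup.2 ⟨mem_insert 0 s, mem_of_superset hs (subset_insert 0 s)⟩
  · have hnhds : 𝓝[Ici 0] x = 𝓝[Ioi 0] x := by
      rw [nhdsWithin_eq_nhds.2 (Ici_mem_nhds hx0), nhdsWithin_eq_nhds.2 (Ioi_mem_nhds hx0)]
    exact hnhds ▸ hcont.locallyIntegrableOn measurableSet_Ioi x hx0

lemma locallyIntegrableOn_Ici_rpow_inv_mul_of_isBigO (hcont : ContinuousOn g (Ioi 0))
    (hO : g =O[𝓝[>] 0] fun x => x ^ p) :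
    LocallyIntegrableOn (fun x => ((x ^ p : ℝ) : ℂ)⁻¹ * g x) (Ici 0) := by
  refine locallyIntegrableOn_Ici_of_isBigO_one
    (ContinuousOn.mul (ContinuousOn.inv₀ ?_ fun x hx => ?_) hcont) ?_
  · exact Complex.continuous_ofReal.comp_continuousOn
      (continuousOn_id.rpow_const fun x hx => Or.inl (mem_Ioi.1 hx).ne')
  · exact Complex.ofReal_ne_zero.2 (Real.rpow_pos_of_pos hx p).ne'
  · obtain ⟨C, hC⟩ := hO.bound
    refine IsBigO.of_bound C ?_
    filter_upwards [hC, self_mem_nhdsWithin] with x hxC hx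
    have hxp : 0 < x ^ p := Real.rpow_pos_of_pos hx p
    rw [Real.norm_of_nonneg hxp.le] at hxC
    rwa [norm_mul, norm_inv, Complex.norm_real, Real.norm_of_nonneg hxp.le, norm_one, mul_one,
      inv_mul_le_iff₀ hxp, mul_comm]

/-- The value at `x` of the expansion `∑ x ^ n * P n (log x)` with integer exponents and
coefficient polynomials `P n`, as a linear function of `P`. -/
def logPolyEval (x : ℝ) : (ℤ →₀ ℂ[X]) →ₗ[ℂ] ℂ :=
  Finsupp.lsum ℂ fun n => (x : ℂ) ^ n • leval (Real.log x : ℂ)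

lemma logPolyEval_single (x : ℝ) (n : ℤ) (R : ℂ[X]) :
    logPolyEval x (Finsupp.single n R) = (x : ℂ) ^ n * R.eval (Real.log x : ℂ) := by
  simp [logPolyEval]

lemma logPolyEval_eq_sum (x : ℝ) (P : ℤ →₀ ℂ[X]) :
    logPolyEval x P = ∑ n ∈ P.support, (x : ℂ) ^ n * (P n).eval (Real.log x : ℂ) := by
  simp [logPolyEval, Finsupp.sum]

lemma continuousOn_ofReal_zpow (n : ℤ) : ContinuousOn (fun s : ℝ => (s : ℂ) ^ n) (Ioi 0) :=
  Complex.continuous_ofReal.continuousOn.zpow₀ n fun _ hx =>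
    Or.inl (Complex.ofReal_ne_zero.2 (mem_Ioi.1 hx).ne')

lemma continuousOn_logPolyEval (P : ℤ →₀ ℂ[X]) :
    ContinuousOn (fun x => logPolyEval x P) (Ioi 0) := by
  simp only [logPolyEval_eq_sum]
  have hlog : ContinuousOn (fun x : ℝ => (Real.log x : ℂ)) (Ioi 0) :=
    Complex.continuous_ofReal.comp_continuousOn
      (Real.continuousOn_log.mono fun x hx => (mem_Ioi.1 hx).ne')
  exact continuousOn_finsetSum _ fun n _ =>
    (continuousOn_ofReal_zpow n).mul ((P n).continuous.comp_continuousOn hlog)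

lemma sum_comp_orderEmbOfFin {ι A : Type*} [LinearOrder ι] [AddCommMonoid A] (S : Finset ι)
    (G : ι → A) : ∑ j, G (S.orderEmbOfFin rfl j) = ∑ i ∈ S, G i := by
  conv_rhs => rw [← Finset.map_orderEmbOfFin_univ S rfl, Finset.sum_map]
  rfl

theorem exists_expandsAtZero_of_isBigO (hf : ContinuousOn f (Ioi 0))
    (hP : ∀ n ∈ P.support, (n : ℝ) ≤ p - 1)
    (hO : (fun x => f x - logPolyEval x P) =O[𝓝[>] 0] fun x => x ^ p) :
    ∃ (N : ℕ) (α : Fin N → ℂ) (Q : Fin N → ℂ[X]),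
      ExpandsAtZero p f α Q ∧ coeffPolyAt 0 α Q = P 0 := by
  let e := P.support.orderEmbOfFin rfl
  have he (j) : e j ∈ P.support := Finset.orderEmbOfFin_mem _ _ j
  refine ⟨_, fun j => (e j : ℂ), fun j => P (e j), ⟨fun i j hij => ?_,
    Int.cast_injective.comp e.injective, fun j => by simpa using hP _ (he j),
    fun j => Finsupp.mem_support_iff.1 (he j),
    fun x => ((x ^ p : ℝ) : ℂ)⁻¹ * (f x - logPolyEval x P), ?_, fun x hx => ?_⟩, ?_⟩
  · simpa using e.monotone hij
  · exact locallyIntegrableOn_Ici_rpow_inv_mul_of_isBigO (hf.sub (continuousOn_logPolyEval P)) hO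
  · have hxp : ((x ^ p : ℝ) : ℂ) ≠ 0 := Complex.ofReal_ne_zero.2 (Real.rpow_pos_of_pos hx p).ne'
    have hsum := sum_comp_orderEmbOfFin P.support
      fun n => (x : ℂ) ^ n * (P n).eval (Real.log x : ℂ)
    simp only [Complex.cpow_intCast, mul_inv_cancel_left₀ hxp, logPolyEval_eq_sum, e, hsum]
    ring
  · have hsum := sum_comp_orderEmbOfFin P.support fun n => if n = 0 then P n else 0
    simp only [coeffPolyAt, Int.cast_eq_zero, e, hsum]
    simp +contextual

theorem isLimZero_of_isBigO (hf : ContinuousOn f (Ioi 0)) (hp : 1 ≤ p)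
    (hP : ∀ n ∈ P.support, (n : ℝ) ≤ p - 1)
    (hO : (fun x => f x - logPolyEval x P) =O[𝓝[>] 0] fun x => x ^ p) :
    IsLimZero f ((P 0).coeff 0) := by
  obtain ⟨N, α, Q, hexpand, hcoeff⟩ := exists_expandsAtZero_of_isBigO hf hP hO
  exact ⟨p, N, α, Q, hp, hexpand, by rw [hcoeff]⟩

theorem isLimInfty_comp_inv_of_isBigO (hf : ContinuousOn f (Ioi 0)) (hp : 2 < p)
    (hP : ∀ n ∈ P.support, (n : ℝ) ≤ p - 1)
    (hO : (fun x => f x - logPolyEval x P) =O[𝓝[>] 0] fun x => x ^ p) :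
    IsLimInfty (fun x => f x⁻¹) ((P 0).coeff 0) := by
  obtain ⟨N, α, Q, hexpand, hcoeff⟩ := exists_expandsAtZero_of_isBigO hf hP hO
  exact ⟨p - 2, N, _, _, by linarith, hexpand.comp_inv,
    by rw [coeff_zero_coeffPolyAt_neg_comp_neg_X, hcoeff]⟩

lemma isBigO_sub_logPolyEval_single_of_eventuallyEq (h : f =ᶠ[𝓝[>] 0] fun _ => L) (p : ℝ) :
    (fun x => f x - logPolyEval x (Finsupp.single 0 (C L))) =O[𝓝[>] 0] fun x => x ^ p :=
  IsBigO.of_bound 0 (h.mono fun x hx => by simp [logPolyEval_single, hx])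

lemma isLimZero_of_eventuallyEq (hf : ContinuousOn f (Ioi 0)) (h : f =ᶠ[𝓝[>] 0] fun _ => L) :
    IsLimZero f L := by
  simpa using isLimZero_of_isBigO hf le_rfl
    (fun n hn => by simp [Finset.mem_singleton.1 (Finsupp.support_single_subset hn)])
    (isBigO_sub_logPolyEval_single_of_eventuallyEq h 1)

lemma isLimInfty_of_eventuallyEq (hf : ContinuousOn f (Ioi 0)) (h : f =ᶠ[atTop] fun _ => L) :
    IsLimInfty f L := by
  have hinv : ContinuousOn (fun x => f x⁻¹) (Ioi 0) :=
    hf.comp (continuousOn_inv₀.mono fun x hx => (mem_Ioi.1 hx).ne') fun x hx =>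
      mem_Ioi.2 (inv_pos.2 hx)
  simpa using isLimInfty_comp_inv_of_isBigO hinv (by norm_num)
    (fun n hn => by simp [Finset.mem_singleton.1 (Finsupp.support_single_subset hn)])
    (isBigO_sub_logPolyEval_single_of_eventuallyEq
      (tendsto_inv_nhdsGT_zero.eventually h) 3)

end Construction

section RegularizedIntegral

lemma intervalIntegrable_of_continuousOn_Ioi {f : ℝ → ℂ} (hf : ContinuousOn f (Ioi 0)) {a b : ℝ}
    (ha : 0 < a) (hb : 0 < b) : IntervalIntegrable f volume a b :=
  (hf.mono (ordConnected_Ioi.uIcc_subset ha hb)).intervalIntegrable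

lemma continuousOn_primitive {f : ℝ → ℂ} (hf : ContinuousOn f (Ioi 0)) :
    ContinuousOn (primitive f) (Ioi 0) := fun x hx =>
  (intervalIntegral.integral_hasDerivAt_right
    (intervalIntegrable_of_continuousOn_Ioi hf one_pos hx)
    (hf.stronglyMeasurableAtFilter isOpen_Ioi x hx)
    (hf.continuousAt (Ioi_mem_nhds hx))).continuousAt.continuousWithinAt

lemma primitive_sub_primitive {f : ℝ → ℂ} (hf : ContinuousOn f (Ioi 0)) {a b : ℝ}
    (ha : 0 < a) (hb : 0 < b) : primitive f b - primitive f a = ∫ s in a..b, f s :=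
  intervalIntegral.integral_interval_sub_left
    (intervalIntegrable_of_continuousOn_Ioi hf one_pos hb)
    (intervalIntegrable_of_continuousOn_Ioi hf one_pos ha)

lemma primitive_eq_neg_primitive_inv {f h : ℝ → ℂ} (hf : ContinuousOn f (Ioi 0))
    (hh : EqOn h (fun ζ => (ζ : ℂ) ^ (-2 : ℤ) * f ζ⁻¹) (Ioi 0)) {x : ℝ} (hx : 0 < x) :
    primitive h x = -primitive f x⁻¹ := by
  have hpos : uIcc 1 x ⊆ Ioi 0 := ordConnected_Ioi.uIcc_subset (mem_Ioi.2 one_pos) hx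
  have hchange := intervalIntegral.integral_deriv_smul_comp' (a := 1) (b := x) (g := f)
    (fun y hy => hasDerivAt_inv (mem_Ioi.1 (hpos hy)).ne')
    (ContinuousOn.neg (ContinuousOn.inv₀ (by fun_prop) fun y hy =>
      pow_ne_zero 2 (mem_Ioi.1 (hpos hy)).ne'))
    (hf.mono (image_subset_iff.2 fun y hy => inv_pos.2 (mem_Ioi.1 (hpos hy))))
  rw [inv_one] at hchange
  rw [primitive, primitive, ← hchange, ← intervalIntegral.integral_neg]
  refine intervalIntegral.integral_congr fun y hy => ?_
  simp [hh (hpos hy), zpow_neg, zpow_ofNat]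

/-- The primitive of `x ^ (n - 1)` without constant term: `log x` if `n = 0`, else `x ^ n / n`. -/
def zpowPrimitive (n : ℤ) (x : ℝ) : ℂ := if n = 0 then (Real.log x : ℂ) else (x : ℂ) ^ n / n

lemma hasDerivAt_zpowPrimitive (n : ℤ) {x : ℝ} (hx : x ≠ 0) :
    HasDerivAt (zpowPrimitive n) ((x : ℂ) ^ (n - 1)) x := by
  unfold zpowPrimitive
  split_ifs with hn
  · subst hn
    simpa using (Real.hasDerivAt_log hx).ofReal_comp
  · have hpow : HasDerivAt (fun y : ℝ => (y : ℂ) ^ n) (n * (x : ℂ) ^ (n - 1)) x :=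
      (hasDerivAt_zpow n (x : ℂ) (Or.inl (Complex.ofReal_ne_zero.2 hx))).comp_ofReal
    simpa only [mul_div_cancel_left₀ _ (Int.cast_ne_zero (α := ℂ).2 hn)] using
      hpow.div_const (n : ℂ)

lemma zpowPrimitive_eq_logPolyEval (n : ℤ) (x : ℝ) :
    zpowPrimitive n x =
      logPolyEval x (Finsupp.single n (if n = 0 then X else C (n : ℂ)⁻¹)) := by
  rw [logPolyEval_single, zpowPrimitive]
  split_ifs with hn
  · simp [hn]
  · simp [div_eq_mul_inv]

lemma primitive_zpow_sub_one (n : ℤ) {x : ℝ} (hx : 0 < x) :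
    primitive (fun s => (s : ℂ) ^ (n - 1)) x = zpowPrimitive n x - zpowPrimitive n 1 :=
  intervalIntegral.integral_eq_sub_of_hasDerivAt
    (fun _ hy => hasDerivAt_zpowPrimitive n
      (mem_Ioi.1 (ordConnected_Ioi.uIcc_subset (mem_Ioi.2 one_pos) (mem_Ioi.2 hx) hy)).ne')
    (intervalIntegrable_of_continuousOn_Ioi (continuousOn_ofReal_zpow _) one_pos hx)

lemma exists_primitive_sub_const_isBigO {ρ : ℝ → ℂ} (hρ : ContinuousOn ρ (Ioi 0)) {m : ℕ}
    (hO : ρ =O[𝓝[>] 0] fun s => s ^ m) :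
    ∃ L, (fun x => primitive ρ x - L) =O[𝓝[>] 0] fun x => x ^ (m + 1) := by
  have hpow : (fun s : ℝ => s ^ m) =O[𝓝[>] 0] fun _ => (1 : ℝ) :=
    ((continuous_pow m).continuousAt.norm.isBoundedUnder_le.isBigO_one ℝ).mono nhdsWithin_le_nhds
  have hloc := locallyIntegrableOn_Ici_of_isBigO_one hρ (hO.trans hpow)
  have hint {x : ℝ} (hx : 0 ≤ x) : IntervalIntegrable ρ volume 0 x :=
    (intervalIntegrable_iff_integrableOn_Icc_of_le hx).2
      (hloc.integrableOn_compact_subset Icc_subset_Ici_self isCompact_Icc)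
  obtain ⟨C, hC⟩ := hO.bound
  obtain ⟨δ, hδ, hbound⟩ := mem_nhdsGT_iff_exists_Ioo_subset.1 hC
  refine ⟨-∫ s in (0 : ℝ)..1, ρ s, IsBigO.of_bound C ?_⟩
  filter_upwards [Ioo_mem_nhdsGT hδ] with x hx
  have hprim : primitive ρ x - -∫ s in (0 : ℝ)..1, ρ s = ∫ s in (0 : ℝ)..x, ρ s := by
    rw [primitive, ← intervalIntegral.integral_interval_sub_left (hint hx.1.le) (hint zero_le_one)]
    ring
  have hC0 : 0 ≤ C := by
    have hxC : ‖ρ x‖ ≤ C * ‖x ^ m‖ := hbound hx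
    exact nonneg_of_mul_nonneg_left ((norm_nonneg _).trans hxC)
      (norm_pos_iff.2 (pow_ne_zero m hx.1.ne'))
  have hle := intervalIntegral.norm_integral_le_of_norm_le_const (f := ρ) (a := 0) (b := x)
    (C := C * x ^ m) fun s hs => by
      rw [uIoc_of_le hx.1.le] at hs
      have hsC : ‖ρ s‖ ≤ C * ‖s ^ m‖ := hbound ⟨hs.1, hs.2.trans_lt hx.2⟩
      rw [Real.norm_of_nonneg (pow_nonneg hs.1.le m)] at hsC
      exact hsC.trans (mul_le_mul_of_nonneg_left (pow_le_pow_left₀ hs.1.le hs.2 m) hC0)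
  rw [hprim, Real.norm_of_nonneg (pow_nonneg hx.1.le _), pow_succ, ← mul_assoc]
  simpa [abs_of_pos hx.1] using hle

variable {ι : Type*} {S : Finset ι} {a : ι → ℂ} {n : ι → ℤ} {f h : ℝ → ℂ} {m : ℕ} {L : ℂ} {R : ℝ}

lemma exists_primitive_isBigO (hf : ContinuousOn f (Ioi 0))
    (hO : (fun s => f s - ∑ i ∈ S, a i * (s : ℂ) ^ (n i - 1)) =O[𝓝[>] 0] fun s => s ^ m) :
    ∃ L, (fun x => primitive f x - (L + ∑ i ∈ S, a i * zpowPrimitive (n i) x))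
      =O[𝓝[>] 0] fun x => x ^ (m + 1) := by
  have hterm (i : ι) : ContinuousOn (fun s : ℝ => a i * (s : ℂ) ^ (n i - 1)) (Ioi 0) :=
    continuousOn_const.mul (continuousOn_ofReal_zpow _)
  have hsum := continuousOn_finsetSum S fun i _ => hterm i
  obtain ⟨L, hL⟩ := exists_primitive_sub_const_isBigO (hf.sub hsum) hO
  refine ⟨L - ∑ i ∈ S, a i * zpowPrimitive (n i) 1, hL.congr' ?_ .rfl⟩
  filter_upwards [self_mem_nhdsWithin] with x hx
  have hint {g : ℝ → ℂ} (hg : ContinuousOn g (Ioi 0)) : IntervalIntegrable g volume 1 x :=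
    intervalIntegrable_of_continuousOn_Ioi hg one_pos hx
  have hprim : primitive (fun s => ∑ i ∈ S, a i * (s : ℂ) ^ (n i - 1)) x =
      ∑ i ∈ S, a i * (zpowPrimitive (n i) x - zpowPrimitive (n i) 1) := by
    simp only [← primitive_zpow_sub_one _ hx, primitive,
      intervalIntegral.integral_finsetSum fun i _ => hint (hterm i),
      intervalIntegral.integral_const_mul]
  calc primitive (fun s => f s - ∑ i ∈ S, a i * (s : ℂ) ^ (n i - 1)) x - L
      = primitive f x - primitive (fun s => ∑ i ∈ S, a i * (s : ℂ) ^ (n i - 1)) x - L := by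
        simp only [primitive, intervalIntegral.integral_sub (hint hf) (hint hsum)]
    _ = _ := by
        simp only [hprim, mul_sub, Finset.sum_sub_distrib]
        ring

/-- The expansion `L + ∑ a i * zpowPrimitive (n i) x`, encoded by its coefficient polynomials. -/
def primitiveExpansion (S : Finset ι) (a : ι → ℂ) (n : ι → ℤ) (L : ℂ) : ℤ →₀ ℂ[X] :=
  Finsupp.single 0 (C L) +
    ∑ i ∈ S, a i • Finsupp.single (n i) (if n i = 0 then X else C (n i : ℂ)⁻¹)

lemma logPolyEval_primitiveExpansion (x : ℝ) :
    logPolyEval x (primitiveExpansion S a n L) = L + ∑ i ∈ S, a i * zpowPrimitive (n i) x := by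
  simp only [primitiveExpansion, zpowPrimitive_eq_logPolyEval, map_add, map_sum, map_smul,
    smul_eq_mul]
  simp [logPolyEval_single]

lemma coeff_zero_primitiveExpansion_zero : (primitiveExpansion S a n L 0).coeff 0 = L := by
  simp only [primitiveExpansion, Finsupp.add_apply, Finsupp.single_eq_same, coeff_add,
    coeff_C_zero, Finsupp.finsetSum_apply, finsetSum_coeff]
  refine add_eq_left.2 (Finset.sum_eq_zero fun i _ => ?_)
  by_cases hi : n i = 0 <;> simp [hi]

lemma le_of_mem_support_primitiveExpansion (hn : ∀ i ∈ S, n i ≤ m) {k : ℤ}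
    (hk : k ∈ (primitiveExpansion S a n L).support) : (k : ℝ) ≤ ((m + 1 : ℕ) : ℝ) - 1 := by
  suffices k ≤ m by
    rw [Nat.cast_succ, add_sub_cancel_right]
    exact_mod_cast this
  by_contra! hmk
  refine Finsupp.mem_support_iff.1 hk ?_
  simp only [primitiveExpansion, Finsupp.add_apply, Finsupp.finsetSum_apply, Finsupp.smul_apply]
  rw [Finsupp.single_eq_of_ne (by omega), zero_add]
  refine Finset.sum_eq_zero fun i hi => ?_
  rw [Finsupp.single_eq_of_ne (by have := hn i hi; omega), smul_zero]

lemma isLimZero_primitive_of_isBigO (hf : ContinuousOn f (Ioi 0)) (hn : ∀ i ∈ S, n i ≤ m)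
    (hO : (fun x => primitive f x - (L + ∑ i ∈ S, a i * zpowPrimitive (n i) x))
      =O[𝓝[>] 0] fun x => x ^ (m + 1)) :
    IsLimZero (primitive f) L := by
  rw [← coeff_zero_primitiveExpansion_zero (S := S) (a := a) (n := n) (L := L)]
  refine isLimZero_of_isBigO (p := ((m + 1 : ℕ) : ℝ)) (continuousOn_primitive hf) (by simp)
    (fun k => le_of_mem_support_primitiveExpansion hn) ?_
  simpa only [logPolyEval_primitiveExpansion, Real.rpow_natCast] using hO

theorem primitive_sub_limZero_isBigO (hf : ContinuousOn f (Ioi 0)) (hn : ∀ i ∈ S, n i ≤ m)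
    (hO : (fun s => f s - ∑ i ∈ S, a i * (s : ℂ) ^ (n i - 1)) =O[𝓝[>] 0] fun s => s ^ m) :
    (fun x => primitive f x - (limZero (primitive f) + ∑ i ∈ S, a i * zpowPrimitive (n i) x))
      =O[𝓝[>] 0] fun x => x ^ (m + 1) := by
  obtain ⟨L, hL⟩ := exists_primitive_isBigO hf hO
  rwa [(isLimZero_primitive_of_isBigO hf hn hL).limZero_eq]

lemma primitive_eq_of_le (hf : ContinuousOn f (Ioi 0)) (hR : 0 < R)
    (hfR : ∀ s, R ≤ s → f s = 0) {x : ℝ} (hx : R ≤ x) : primitive f x = primitive f R := by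
  rw [← sub_eq_zero, primitive_sub_primitive hf hR (hR.trans_le hx)]
  exact intervalIntegral.integral_zero_ae (.of_forall fun s hs =>
    hfR s (by rw [uIoc_of_le hx] at hs; exact hs.1.le))

lemma regInt_eq_of_forall_le_eq_zero (hf : ContinuousOn f (Ioi 0)) (hR : 0 < R)
    (hfR : ∀ s, R ≤ s → f s = 0) : regInt f = primitive f R - limZero (primitive f) := by
  have hlim : IsLimInfty (primitive f) (primitive f R) :=
    isLimInfty_of_eventuallyEq (continuousOn_primitive hf)
      ((eventually_ge_atTop R).mono fun x hx => primitive_eq_of_le hf hR hfR hx)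
  rw [regInt, hlim.limInfty_eq]

theorem integral_sub_regInt_isBigO (hf : ContinuousOn f (Ioi 0)) (hR : 0 < R)
    (hfR : ∀ s, R ≤ s → f s = 0) (hn : ∀ i ∈ S, n i ≤ m)
    (hO : (fun s => f s - ∑ i ∈ S, a i * (s : ℂ) ^ (n i - 1)) =O[𝓝[>] 0] fun s => s ^ m) :
    (fun ε => (∫ s in ε..R, f s) - (regInt f - ∑ i ∈ S, a i * zpowPrimitive (n i) ε))
      =O[𝓝[>] 0] fun ε => ε ^ (m + 1) := by
  refine (primitive_sub_limZero_isBigO hf hn hO).neg_left.congr' ?_ .rfl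
  filter_upwards [self_mem_nhdsWithin] with ε hε
  rw [← primitive_sub_primitive hf hε hR, regInt_eq_of_forall_le_eq_zero hf hR hfR]
  ring

lemma IsLimInfty.congr (hf : IsLimInfty f L) (hfh : EqOn f h (Ioi 0)) : IsLimInfty h L := by
  obtain ⟨q, M, β, Q, hq, ⟨hanti, hinj, hre, hne, f₂, hf₂, hexpand⟩, hL⟩ := hf
  exact ⟨q, M, β, Q, hq,
    ⟨hanti, hinj, hre, hne, f₂, hf₂, fun x hx => (hfh hx).symm.trans (hexpand x hx)⟩, hL⟩

lemma isLimInfty_neg_primitive_inv (hf : ContinuousOn f (Ioi 0)) (hn : ∀ i ∈ S, n i ≤ m)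
    (hm : 2 ≤ m)
    (hO : (fun s => f s - ∑ i ∈ S, a i * (s : ℂ) ^ (n i - 1)) =O[𝓝[>] 0] fun s => s ^ m) :
    IsLimInfty (fun x => -primitive f x⁻¹) (-limZero (primitive f)) := by
  have hexpand := (primitive_sub_limZero_isBigO hf hn hO).neg_left
  set P := primitiveExpansion S a n (limZero (primitive f)) with hPdef
  have hcoeff : ((-P) 0).coeff 0 = -limZero (primitive f) := by
    rw [Finsupp.neg_apply, coeff_neg, hPdef, coeff_zero_primitiveExpansion_zero]
  rw [← hcoeff]
  refine isLimInfty_comp_inv_of_isBigO (f := fun x => -primitive f x) (p := ((m + 1 : ℕ) : ℝ))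
    (continuousOn_primitive hf).neg (by exact_mod_cast Nat.lt_succ_of_le hm)
    (fun k hk => le_of_mem_support_primitiveExpansion hn (by rwa [Finsupp.support_neg] at hk)) ?_
  simpa only [map_neg, logPolyEval_primitiveExpansion, Real.rpow_natCast, neg_sub, hPdef,
    sub_neg_eq_add, neg_add_eq_sub] using hexpand

theorem regInt_eq_of_eqOn_inv (hf : ContinuousOn f (Ioi 0)) (hR : 0 < R)
    (hfR : ∀ s, R ≤ s → f s = 0) (hn : ∀ i ∈ S, n i ≤ m) (hm : 2 ≤ m)
    (hO : (fun s => f s - ∑ i ∈ S, a i * (s : ℂ) ^ (n i - 1)) =O[𝓝[>] 0] fun s => s ^ m)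
    (hh : EqOn h (fun ζ => (ζ : ℂ) ^ (-2 : ℤ) * f ζ⁻¹) (Ioi 0)) : regInt h = regInt f := by
  have hprim : EqOn (fun x => -primitive f x⁻¹) (primitive h) (Ioi 0) := fun x hx =>
    (primitive_eq_neg_primitive_inv hf hh hx).symm
  have hlimInfty : IsLimInfty (primitive h) (-limZero (primitive f)) :=
    (isLimInfty_neg_primitive_inv hf hn hm hO).congr hprim
  have hcont : ContinuousOn (primitive h) (Ioi 0) :=
    ((continuousOn_primitive hf).comp (continuousOn_inv₀.mono fun x hx => (mem_Ioi.1 hx).ne')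
      fun x hx => mem_Ioi.2 (inv_pos.2 hx)).neg.congr hprim.symm
  have hlimZero : IsLimZero (primitive h) (-primitive f R) := by
    refine isLimZero_of_eventuallyEq hcont ?_
    filter_upwards [self_mem_nhdsWithin,
      tendsto_inv_nhdsGT_zero.eventually (eventually_ge_atTop R)] with x hx hxR
    simp only [← hprim hx, primitive_eq_of_le hf hR hfR hxR]
  rw [regInt, hlimInfty.limInfty_eq, hlimZero.limZero_eq,
    regInt_eq_of_forall_le_eq_zero hf hR hfR]
  ring

end RegularizedIntegral

section Taylor

/-- The coefficient of `x ^ k` in the Taylor series of `g` at `0`. -/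
def taylorCoeff (g : ℝ → ℂ) (k : ℕ) : ℂ := iteratedDeriv k g 0 / (k.factorial : ℂ)

lemma taylorWithinEval_Icc_zero_eq_sum {g : ℝ → ℂ} {n : ℕ} (hg : ContDiff ℝ n g) {b : ℝ}
    (hb : 0 < b) (x : ℝ) :
    taylorWithinEval g n (Icc 0 b) 0 x =
      ∑ k ∈ Finset.range (n + 1), taylorCoeff g k * (x : ℂ) ^ k := by
  rw [taylor_within_apply]
  refine Finset.sum_congr rfl fun k hk => ?_
  have hkn : (k : WithTop ℕ∞) ≤ n := by exact_mod_cast Finset.mem_range_succ_iff.1 hk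
  rw [iteratedDerivWithin_eq_iteratedDeriv (uniqueDiffOn_Icc hb) (hg.of_le hkn).contDiffAt
    (left_mem_Icc.2 hb.le), taylorCoeff, Complex.real_smul]
  push_cast
  rw [sub_zero]
  ring

lemma norm_sub_sum_taylorCoeff_le {g : ℝ → ℂ} {n : ℕ} (hg : ContDiff ℝ (n + 1 : ℕ) g) {b C : ℝ}
    (hb : 0 < b) (hC : ∀ y ∈ Icc 0 b, ‖iteratedDeriv (n + 1) g y‖ ≤ C) {x : ℝ}
    (hx : x ∈ Icc 0 b) :
    ‖g x - ∑ k ∈ Finset.range (n + 1), taylorCoeff g k * (x : ℂ) ^ k‖ ≤ C * x ^ (n + 1) := by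
  have hbound := taylor_mean_remainder_bound hb.le (by exact_mod_cast hg.contDiffOn) hx
    fun y hy => by
      rw [iteratedDerivWithin_eq_iteratedDeriv (uniqueDiffOn_Icc hb) hg.contDiffAt hy]
      exact hC y hy
  have hn : (n : WithTop ℕ∞) ≤ (n + 1 : ℕ) := by exact_mod_cast n.le_succ
  rw [taylorWithinEval_Icc_zero_eq_sum (hg.of_le hn) hb, sub_zero] at hbound
  have hC0 : 0 ≤ C := (norm_nonneg _).trans (hC x hx)
  exact hbound.trans (div_le_self (mul_nonneg hC0 (pow_nonneg hx.1 _))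
    (by exact_mod_cast n.factorial_pos))

lemma sub_sum_taylorCoeff_isBigO {g : ℝ → ℂ} {n : ℕ} (hg : ContDiff ℝ (n + 1 : ℕ) g) :
    (fun x : ℝ => g x - ∑ k ∈ Finset.range (n + 1), taylorCoeff g k * (x : ℂ) ^ k)
      =O[𝓝[>] 0] fun x => x ^ (n + 1) := by
  obtain ⟨C, hC⟩ := isCompact_Icc.exists_bound_of_continuousOn (s := Icc (0 : ℝ) 1)
    (hg.continuous_iteratedDeriv (n + 1) le_rfl).continuousOn
  refine IsBigO.of_bound C ?_
  filter_upwards [Ioo_mem_nhdsGT one_pos] with x hx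
  rw [Real.norm_of_nonneg (pow_nonneg hx.1.le _)]
  exact norm_sub_sum_taylorCoeff_le hg one_pos hC ⟨hx.1.le, hx.2.le⟩

/-- The function `s ↦ s ^ (-1 - j) * g s`. For `g s = taylorCoeff (u s) j` it is the integrand of
the regularized integral `b_j`. -/
def negPowMul (j : ℕ) (g : ℝ → ℂ) (s : ℝ) : ℂ := (s : ℂ) ^ (-1 - (j : ℤ)) * g s

variable {g : ℝ → ℂ} {R : ℝ}

lemma continuousOn_negPowMul (hg : Continuous g) (j : ℕ) :
    ContinuousOn (negPowMul j g) (Ioi 0) :=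
  (continuousOn_ofReal_zpow _).mul hg.continuousOn

lemma negPowMul_eq_zero_of_le (hgR : ∀ s, R ≤ s → g s = 0) (j : ℕ) (s : ℝ) (hs : R ≤ s) :
    negPowMul j g s = 0 := by
  rw [negPowMul, hgR s hs, mul_zero]

lemma negPowMul_sub_sum_isBigO {j m : ℕ} (hg : ContDiff ℝ (j + m + 1 : ℕ) g) :
    (fun s => negPowMul j g s - ∑ k ∈ Finset.range (j + m + 1),
        taylorCoeff g k * (s : ℂ) ^ ((k : ℤ) - j - 1)) =O[𝓝[>] 0] fun s => s ^ m := by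
  have hpow : (fun s : ℝ => (s : ℂ) ^ (-1 - (j : ℤ))) =O[𝓝[>] 0]
      fun s : ℝ => s ^ (-1 - (j : ℤ)) :=
    isBigO_of_le _ fun s => by simp
  refine (hpow.mul (sub_sum_taylorCoeff_isBigO hg)).congr' ?_ ?_
  · filter_upwards [self_mem_nhdsWithin] with s hs
    have hs0 : (s : ℂ) ≠ 0 := Complex.ofReal_ne_zero.2 (mem_Ioi.1 hs).ne'
    rw [mul_sub, Finset.mul_sum, negPowMul]
    refine congrArg _ (Finset.sum_congr rfl fun k _ => ?_)
    rw [mul_left_comm, ← zpow_natCast (s : ℂ) k, ← zpow_add₀ hs0]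
    congr 2
    ring
  · filter_upwards [self_mem_nhdsWithin] with s hs
    rw [← zpow_natCast s m, ← zpow_natCast, ← zpow_add₀ (mem_Ioi.1 hs).ne']
    congr 1
    push_cast
    ring

theorem integral_negPowMul_sub_regInt_isBigO {j m : ℕ} (hg : ContDiff ℝ (j + m + 1 : ℕ) g)
    (hR : 0 < R) (hgR : ∀ s, R ≤ s → g s = 0) :
    (fun ε => (∫ s in ε..R, negPowMul j g s) - (regInt (negPowMul j g) -
        ∑ k ∈ Finset.range (j + m + 1), taylorCoeff g k * zpowPrimitive ((k : ℤ) - j) ε))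
      =O[𝓝[>] 0] fun ε => ε ^ (m + 1) :=
  integral_sub_regInt_isBigO (continuousOn_negPowMul hg.continuous j) hR
    (negPowMul_eq_zero_of_le hgR j)
    (fun k hk => by have := Finset.mem_range.1 hk; omega) (negPowMul_sub_sum_isBigO hg)

theorem regInt_zpow_mul_comp_inv (hg : ContDiff ℝ ∞ g) (hR : 0 < R)
    (hgR : ∀ s, R ≤ s → g s = 0) (j : ℕ) :
    regInt (fun ζ : ℝ => (ζ : ℂ) ^ ((j : ℤ) - 1) * g ζ⁻¹) = regInt (negPowMul j g) := by
  refine regInt_eq_of_eqOn_inv (continuousOn_negPowMul hg.continuous j) hR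
    (negPowMul_eq_zero_of_le hgR j)
    (fun k hk => by have := Finset.mem_range.1 hk; omega) le_rfl
    (negPowMul_sub_sum_isBigO (contDiff_infty.1 hg _)) fun ζ hζ => ?_
  have hζ0 : (ζ : ℂ) ≠ 0 := Complex.ofReal_ne_zero.2 (mem_Ioi.1 hζ).ne'
  simp only [negPowMul, Complex.ofReal_inv, inv_zpow', ← mul_assoc, ← zpow_add₀ hζ0]
  congr 2
  ring

end Taylor

section PartialDerivatives

variable {F : Type*} [NormedAddCommGroup F] [NormedSpace ℝ F] {u : ℝ → ℝ → F}

/-- The partial derivative in the first variable. -/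
def partialFst (u : ℝ → ℝ → F) (x y : ℝ) : F := deriv (fun x' => u x' y) x

/-- The partial derivative in the second variable. -/
def partialSnd (u : ℝ → ℝ → F) (x y : ℝ) : F := deriv (u x) y

lemma iterate_partialFst_apply (u : ℝ → ℝ → F) (k : ℕ) (x y : ℝ) :
    (partialFst^[k] u) x y = iteratedDeriv k (fun x' => u x' y) x := by
  induction k generalizing x with
  | zero => simp
  | succ k ih => simp only [Function.iterate_succ_apply', partialFst, ih, iteratedDeriv_succ]

lemma iterate_partialSnd_apply (u : ℝ → ℝ → F) (k : ℕ) (x y : ℝ) :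
    (partialSnd^[k] u) x y = iteratedDeriv k (u x) y := by
  induction k generalizing y with
  | zero => simp
  | succ k ih =>
    rw [Function.iterate_succ_apply', partialSnd, iteratedDeriv_succ]
    exact congrArg (deriv · y) (funext ih)

lemma partialFst_eq_fderiv (hu : Differentiable ℝ (Function.uncurry u)) (x y : ℝ) :
    partialFst u x y = fderiv ℝ (Function.uncurry u) (x, y) (1, 0) :=
  ((hu (x, y)).hasFDerivAt.comp_hasDerivAt (f := fun x' => (x', y)) x
    ((hasDerivAt_id' x).prodMk (hasDerivAt_const x y))).deriv

lemma partialSnd_eq_fderiv (hu : Differentiable ℝ (Function.uncurry u)) (x y : ℝ) :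
    partialSnd u x y = fderiv ℝ (Function.uncurry u) (x, y) (0, 1) :=
  ((hu (x, y)).hasFDerivAt.comp_hasDerivAt (f := fun y' => (x, y')) y
    ((hasDerivAt_const y x).prodMk (hasDerivAt_id' y))).deriv

lemma uncurry_partialFst (hu : Differentiable ℝ (Function.uncurry u)) :
    Function.uncurry (partialFst u) = fun z => fderiv ℝ (Function.uncurry u) z (1, 0) :=
  funext fun z => partialFst_eq_fderiv hu z.1 z.2

lemma uncurry_partialSnd (hu : Differentiable ℝ (Function.uncurry u)) :
    Function.uncurry (partialSnd u) = fun z => fderiv ℝ (Function.uncurry u) z (0, 1) :=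
  funext fun z => partialSnd_eq_fderiv hu z.1 z.2

lemma contDiff_uncurry_partialFst (hu : ContDiff ℝ ∞ (Function.uncurry u)) :
    ContDiff ℝ ∞ (Function.uncurry (partialFst u)) := by
  rw [uncurry_partialFst (hu.differentiable (by simp))]
  exact (hu.fderiv_right (by simp)).clm_apply contDiff_const

lemma contDiff_uncurry_partialSnd (hu : ContDiff ℝ ∞ (Function.uncurry u)) :
    ContDiff ℝ ∞ (Function.uncurry (partialSnd u)) := by
  rw [uncurry_partialSnd (hu.differentiable (by simp))]
  exact (hu.fderiv_right (by simp)).clm_apply contDiff_const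

lemma contDiff_uncurry_iterate_partialSnd (hu : ContDiff ℝ ∞ (Function.uncurry u)) (k : ℕ) :
    ContDiff ℝ ∞ (Function.uncurry (partialSnd^[k] u)) := by
  induction k with
  | zero => exact hu
  | succ k ih =>
    rw [Function.iterate_succ_apply']
    exact contDiff_uncurry_partialSnd ih

lemma partialFst_partialSnd_comm (hu : ContDiff ℝ 2 (Function.uncurry u)) :
    partialFst (partialSnd u) = partialSnd (partialFst u) := by
  ext x y
  have hdiff : Differentiable ℝ (Function.uncurry u) := hu.differentiable (by simp)
  have hfderiv : Differentiable ℝ (fderiv ℝ (Function.uncurry u)) :=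
    (hu.fderiv_right (m := 1) (by norm_num)).differentiable (by simp)
  have hsymm : IsSymmSndFDerivAt ℝ (Function.uncurry u) (x, y) :=
    hu.contDiffAt.isSymmSndFDerivAt (by simp)
  have happly (v w : ℝ × ℝ) :
      fderiv ℝ (fun z => fderiv ℝ (Function.uncurry u) z v) (x, y) w =
        fderiv ℝ (fderiv ℝ (Function.uncurry u)) (x, y) w v := by
    simp [fderiv_clm_apply (hfderiv _) (differentiableAt_const v)]
  have hconst (v : ℝ × ℝ) : Differentiable ℝ fun z => fderiv ℝ (Function.uncurry u) z v :=
    hfderiv.clm_apply (differentiable_const v)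
  rw [partialFst_eq_fderiv (by rw [uncurry_partialSnd hdiff]; exact hconst _),
    partialSnd_eq_fderiv (by rw [uncurry_partialFst hdiff]; exact hconst _),
    uncurry_partialFst hdiff, uncurry_partialSnd hdiff, happly, happly, hsymm]

lemma partialFst_iterate_partialSnd_comm (hu : ContDiff ℝ ∞ (Function.uncurry u)) (k : ℕ) :
    partialFst (partialSnd^[k] u) = partialSnd^[k] (partialFst u) := by
  induction k with
  | zero => rfl
  | succ k ih =>
    rw [Function.iterate_succ_apply', Function.iterate_succ_apply', ← ih]
    exact partialFst_partialSnd_comm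
      (contDiff_infty.1 (contDiff_uncurry_iterate_partialSnd hu k) 2)

lemma iterate_partialFst_iterate_partialSnd_comm (hu : ContDiff ℝ ∞ (Function.uncurry u))
    (j k : ℕ) : partialFst^[j] (partialSnd^[k] u) = partialSnd^[k] (partialFst^[j] u) := by
  induction j generalizing u with
  | zero => rfl
  | succ j ih =>
    rw [Function.iterate_succ_apply, Function.iterate_succ_apply,
      partialFst_iterate_partialSnd_comm hu, ih (contDiff_uncurry_partialFst hu)]

lemma iteratedDeriv_iteratedDeriv_comm (hu : ContDiff ℝ ∞ (Function.uncurry u)) (j k : ℕ)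
    (x y : ℝ) :
    iteratedDeriv k (fun y' => iteratedDeriv j (fun x' => u x' y') x) y =
      iteratedDeriv j (fun x' => iteratedDeriv k (u x') y) x := by
  simp only [← iterate_partialFst_apply u, ← iterate_partialSnd_apply u]
  rw [← iterate_partialFst_apply (partialSnd^[k] u),
    iterate_partialFst_iterate_partialSnd_comm hu]
  exact (iterate_partialSnd_apply _ _ _ _).symm

end PartialDerivatives

section PartialTaylor

variable {u : ℝ → ℝ → ℂ}

lemma contDiff_taylorCoeff (hu : ContDiff ℝ ∞ (Function.uncurry u)) (j : ℕ) :
    ContDiff ℝ ∞ fun x => taylorCoeff (u x) j := by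
  simp only [taylorCoeff, ← iterate_partialSnd_apply]
  exact ((contDiff_uncurry_iterate_partialSnd hu j).comp
    (contDiff_id.prodMk (contDiff_const (c := (0 : ℝ))))).div_const _

lemma taylorCoeff_taylorCoeff_comm (hu : ContDiff ℝ ∞ (Function.uncurry u)) (j k : ℕ) :
    taylorCoeff (fun y => taylorCoeff (fun x => u x y) j) k =
      taylorCoeff (fun x => taylorCoeff (u x) k) j := by
  simp only [taylorCoeff, iteratedDeriv_div_const, iteratedDeriv_iteratedDeriv_comm hu]
  ring

lemma exists_norm_sub_sum_taylorCoeff_le (hu : ContDiff ℝ ∞ (Function.uncurry u)) {K : Set ℝ}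
    (hK : IsCompact K) {b : ℝ} (hb : 0 < b) (n : ℕ) :
    ∃ C, ∀ x ∈ K, ∀ y ∈ Icc 0 b,
      ‖u x y - ∑ k ∈ Finset.range (n + 1), taylorCoeff (u x) k * (y : ℂ) ^ k‖
        ≤ C * y ^ (n + 1) := by
  obtain ⟨C, hC⟩ := (hK.prod isCompact_Icc).exists_bound_of_continuousOn
    (contDiff_uncurry_iterate_partialSnd hu (n + 1)).continuous.continuousOn
  have hux (x : ℝ) : ContDiff ℝ ∞ (u x) := hu.comp (contDiff_const.prodMk contDiff_id)
  refine ⟨C, fun x hx y hy => norm_sub_sum_taylorCoeff_le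
    (contDiff_infty.1 (hux x) _) hb (fun z hz => ?_) hy⟩
  rw [← iterate_partialSnd_apply]
  exact hC (x, z) ⟨hx, hz⟩

end PartialTaylor

section Pushforward

variable {u v : ℝ → ℝ → ℂ} {R : ℝ}

lemma pow_isBigO_pow_nhdsGT_zero {m n : ℕ} (hmn : m ≤ n) :
    (fun x : ℝ => x ^ n) =O[𝓝[>] 0] fun x => x ^ m := by
  rcases hmn.eq_or_lt with rfl | hlt
  · exact isBigO_refl _ _
  · exact (isLittleO_pow_pow hlt).isBigO.mono nhdsWithin_le_nhds

/-- The push-forward under `(x, y) ↦ x * y` of the density `u` on the positive quadrant. -/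
def pushforward (u : ℝ → ℝ → ℂ) (t : ℝ) : ℂ := ∫ x in Ioi (0 : ℝ), u x (t / x) * (1 / (x : ℂ))

lemma exists_forall_le_eq_zero (hsupp : HasCompactSupport (Function.uncurry u)) :
    ∃ R, 0 < R ∧ (∀ x y, R ≤ x → u x y = 0) ∧ ∀ x y, R ≤ y → u x y = 0 := by
  obtain ⟨r, hr⟩ := hsupp.isCompact.isBounded.subset_ball (0 : ℝ × ℝ)
  have hzero (x y : ℝ) (hxy : r ≤ max |x| |y|) : u x y = 0 := by
    by_contra hne
    have hmem := hr (subset_tsupport (Function.uncurry u) (a := (x, y)) hne)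
    rw [mem_ball_zero_iff, Prod.norm_def] at hmem
    exact hmem.not_ge hxy
  refine ⟨max r 1, by positivity, fun x y hx => hzero x y ?_, fun x y hy => hzero x y ?_⟩
  · exact ((le_max_left r 1).trans hx).trans ((le_abs_self x).trans (le_max_left _ _))
  · exact ((le_max_left r 1).trans hy).trans ((le_abs_self y).trans (le_max_right _ _))

lemma continuousOn_comp_div_mul_inv (hu : Continuous (Function.uncurry u)) (t : ℝ) :
    ContinuousOn (fun x : ℝ => u x (t / x) * (1 / (x : ℂ))) (Ioi 0) := by
  have hne (x : ℝ) (hx : x ∈ Ioi 0) : x ≠ 0 := (mem_Ioi.1 hx).ne'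
  refine (hu.comp_continuousOn (f := fun x : ℝ => (x, t / x)) ?_).mul ?_
  · exact continuousOn_id.prodMk (continuousOn_const.div continuousOn_id hne)
  · exact continuousOn_const.div Complex.continuous_ofReal.continuousOn fun x hx =>
      Complex.ofReal_ne_zero.2 (hne x hx)

lemma pushforward_eq_intervalIntegral (hR : 0 < R) (hux : ∀ x y, R ≤ x → u x y = 0)
    (huy : ∀ x y, R ≤ y → u x y = 0) {t : ℝ} (ht : 0 < t) (htR : t / R ≤ R) :
    pushforward u t = ∫ x in (t / R)..R, u x (t / x) * (1 / (x : ℂ)) := by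
  rw [intervalIntegral.integral_of_le htR]
  refine setIntegral_eq_of_subset_of_forall_sdiff_eq_zero measurableSet_Ioi
    (fun x hx => (div_pos ht hR).trans hx.1) fun x hx => ?_
  suffices u x (t / x) = 0 by rw [this, zero_mul]
  rcases le_or_gt x (t / R) with hxt | hxt
  · exact huy _ _ ((le_div_comm₀ (mem_Ioi.1 hx.1) hR).1 hxt)
  · exact hux _ _ (not_le.1 fun hxR => hx.2 ⟨hxt, hxR⟩).le

lemma integral_comp_div_swap (hu : Continuous (Function.uncurry u)) {t a b : ℝ} (ht : 0 < t)
    (ha : 0 < a) (hb : 0 < b) :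
    ∫ y in a..b, u (t / y) y * (1 / (y : ℂ)) =
      ∫ x in (t / b)..(t / a), u x (t / x) * (1 / (x : ℂ)) := by
  have hpos {y : ℝ} (hy : y ∈ uIcc a b) : 0 < y := ordConnected_Ioi.uIcc_subset ha hb hy
  have hderiv (y : ℝ) (hy : y ∈ uIcc a b) : HasDerivAt (fun y => t / y) (-t / y ^ 2) y := by
    simpa [div_eq_mul_inv] using (hasDerivAt_inv (hpos hy).ne').const_mul t
  have hchange := intervalIntegral.integral_deriv_smul_comp' (a := a) (b := b) hderiv
    (continuousOn_const.div (by fun_prop) fun y hy => pow_ne_zero 2 (hpos hy).ne')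
    ((continuousOn_comp_div_mul_inv hu t).mono
      (image_subset_iff.2 fun y hy => div_pos ht (hpos hy)))
  rw [intervalIntegral.integral_symm (t / a), ← hchange, ← intervalIntegral.integral_neg]
  refine intervalIntegral.integral_congr fun y hy => ?_
  have hy0 : (y : ℂ) ≠ 0 := Complex.ofReal_ne_zero.2 (hpos hy).ne'
  have ht0 : (t : ℂ) ≠ 0 := Complex.ofReal_ne_zero.2 ht.ne'
  simp only [Function.comp_apply, div_div_cancel₀ ht.ne', Complex.real_smul]
  push_cast
  field_simp

theorem pushforward_sq_eq_add (hu : Continuous (Function.uncurry u)) (hR : 0 < R)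
    (hux : ∀ x y, R ≤ x → u x y = 0) (huy : ∀ x y, R ≤ y → u x y = 0) {ε : ℝ} (hε : 0 < ε)
    (hεR : ε ≤ R) :
    pushforward u (ε ^ 2) = (∫ x in ε..R, u x (ε ^ 2 / x) * (1 / (x : ℂ))) +
      ∫ y in ε..R, u (ε ^ 2 / y) y * (1 / (y : ℂ)) := by
  have hint {a b : ℝ} (ha : 0 < a) (hb : 0 < b) :=
    intervalIntegrable_of_continuousOn_Ioi (continuousOn_comp_div_mul_inv hu (ε ^ 2)) ha hb
  have hε2 : 0 < ε ^ 2 := by positivity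
  have hεdiv : ε ^ 2 / ε = ε := by field_simp
  have hle : ε ^ 2 / R ≤ R := (div_le_iff₀ hR).2 (by nlinarith)
  rw [pushforward_eq_intervalIntegral hR hux huy hε2 hle, integral_comp_div_swap hu hε2 hε hR,
    hεdiv, add_comm,
    intervalIntegral.integral_add_adjacent_intervals (hint (div_pos hε2 hR) hε) (hint hε hR)]

lemma integral_sub_sum_integral_negPowMul (hv : ContDiff ℝ ∞ (Function.uncurry v)) {t a b : ℝ}
    (ha : 0 < a) (hb : 0 < b) (M : ℕ) :
    (∫ x in a..b, v x (t / x) * (1 / (x : ℂ))) - ∑ j ∈ Finset.range M,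
        (t : ℂ) ^ j * ∫ x in a..b, negPowMul j (fun x => taylorCoeff (v x) j) x =
      ∫ x in a..b, (v x (t / x) - ∑ j ∈ Finset.range M,
        taylorCoeff (v x) j * ((t / x : ℝ) : ℂ) ^ j) * (1 / (x : ℂ)) := by
  have hint (j : ℕ) : IntervalIntegrable
      (fun x => (t : ℂ) ^ j * negPowMul j (fun x => taylorCoeff (v x) j) x) volume a b :=
    (intervalIntegrable_of_continuousOn_Ioi
      (continuousOn_negPowMul (contDiff_taylorCoeff hv j).continuous j) ha hb).const_mul _
  have hsum : IntervalIntegrable (fun x => ∑ j ∈ Finset.range M,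
      (t : ℂ) ^ j * negPowMul j (fun x => taylorCoeff (v x) j) x) volume a b := by
    simpa only [Finset.sum_fn] using
      IntervalIntegrable.sum (Finset.range M) fun j _ => hint j
  simp only [← intervalIntegral.integral_const_mul]
  rw [← intervalIntegral.integral_finsetSum fun j _ => hint j,
    ← intervalIntegral.integral_sub (intervalIntegrable_of_continuousOn_Ioi
      (continuousOn_comp_div_mul_inv hv.continuous t) ha hb) hsum]
  refine intervalIntegral.integral_congr fun x hx => ?_
  have hx0 : (x : ℂ) ≠ 0 :=
    Complex.ofReal_ne_zero.2 (mem_Ioi.1 (ordConnected_Ioi.uIcc_subset ha hb hx)).ne'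
  simp only [sub_mul, Finset.sum_mul, negPowMul]
  refine congrArg _ (Finset.sum_congr rfl fun j _ => ?_)
  rw [sub_eq_add_neg, zpow_add₀ hx0, zpow_neg, zpow_neg, zpow_one, zpow_natCast,
    Complex.ofReal_div, div_pow]
  field_simp

lemma integral_sub_sum_integral_negPowMul_isBigO (hv : ContDiff ℝ ∞ (Function.uncurry v))
    (hR : 0 < R) (M : ℕ) :
    (fun ε : ℝ => (∫ x in ε..R, v x (ε ^ 2 / x) * (1 / (x : ℂ))) -
        ∑ j ∈ Finset.range (M + 1), ((ε ^ 2 : ℝ) : ℂ) ^ j *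
          ∫ x in ε..R, negPowMul j (fun x => taylorCoeff (v x) j) x)
      =O[𝓝[>] 0] fun ε => ε ^ M := by
  obtain ⟨C, hC⟩ := exists_norm_sub_sum_taylorCoeff_le hv (isCompact_Icc (a := 0) (b := R))
    one_pos M
  refine IsBigO.of_bound (|C| * R) ?_
  filter_upwards [Ioo_mem_nhdsGT (lt_min one_pos hR)] with ε hε
  have hε1 : ε ≤ 1 := hε.2.le.trans (min_le_left _ _)
  have hεR : ε ≤ R := hε.2.le.trans (min_le_right _ _)
  have hbound : ∀ x ∈ uIoc ε R, ‖(v x (ε ^ 2 / x) - ∑ j ∈ Finset.range (M + 1),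
      taylorCoeff (v x) j * ((ε ^ 2 / x : ℝ) : ℂ) ^ j) * (1 / (x : ℂ))‖ ≤ |C| * ε ^ M := by
    intro x hx
    rw [uIoc_of_le hεR] at hx
    have hx0 : 0 < x := hε.1.trans hx.1
    have hy0 : 0 ≤ ε ^ 2 / x := by positivity
    have hy : ε ^ 2 / x ≤ ε := (div_le_iff₀ hx0).2 (by nlinarith [hx.1, hε.1])
    rw [norm_mul, norm_div, norm_one, Complex.norm_of_nonneg hx0.le]
    calc _ ≤ C * (ε ^ 2 / x) ^ (M + 1) * (1 / x) := by
          gcongr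
          exact hC x ⟨hx0.le, hx.2⟩ _ ⟨hy0, hy.trans hε1⟩
      _ ≤ |C| * ε ^ (M + 1) * (1 / ε) := by
          have hx' := hx.1.le
          have hε0 := hε.1
          gcongr
          exact le_abs_self C
      _ = |C| * ε ^ M := by rw [pow_succ]; field_simp [hε.1.ne']
  rw [integral_sub_sum_integral_negPowMul hv hε.1 hR,
    Real.norm_of_nonneg (pow_nonneg hε.1.le M)]
  refine (intervalIntegral.norm_integral_le_of_norm_le_const hbound).trans ?_
  rw [abs_of_nonneg (sub_nonneg.2 hεR), mul_right_comm]
  have hε0 := hε.1.le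
  gcongr
  exact sub_le_self R hε0

theorem integral_comp_sq_div_sub_sum_isBigO (hv : ContDiff ℝ ∞ (Function.uncurry v)) (hR : 0 < R)
    (hvx : ∀ x y, R ≤ x → v x y = 0) (M : ℕ) :
    (fun ε : ℝ => (∫ x in ε..R, v x (ε ^ 2 / x) * (1 / (x : ℂ))) -
        ∑ j ∈ Finset.range (M + 1), ((ε ^ 2 : ℝ) : ℂ) ^ j *
          (regInt (negPowMul j fun x => taylorCoeff (v x) j) - ∑ k ∈ Finset.range (M + 1),
            taylorCoeff (fun x => taylorCoeff (v x) j) k * zpowPrimitive ((k : ℤ) - j) ε))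
      =O[𝓝[>] 0] fun ε => ε ^ M := by
  have hcoeffR (j : ℕ) (x : ℝ) (hx : R ≤ x) : taylorCoeff (v x) j = 0 := by
    have hvx0 : v x = fun _ => 0 := funext fun y => hvx x y hx
    simp [taylorCoeff, hvx0]
  have hterm : ∀ j ∈ Finset.range (M + 1), (fun ε : ℝ => ((ε ^ 2 : ℝ) : ℂ) ^ j *
      ((∫ x in ε..R, negPowMul j (fun x => taylorCoeff (v x) j) x) -
        (regInt (negPowMul j fun x => taylorCoeff (v x) j) - ∑ k ∈ Finset.range (M + 1),
          taylorCoeff (fun x => taylorCoeff (v x) j) k * zpowPrimitive ((k : ℤ) - j) ε)))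
      =O[𝓝[>] 0] fun ε => ε ^ M := by
    intro j hj
    obtain ⟨m, rfl⟩ := Nat.exists_eq_add_of_le (Finset.mem_range_succ_iff.1 hj)
    have hpow : (fun ε : ℝ => ((ε ^ 2 : ℝ) : ℂ) ^ j) =O[𝓝[>] 0] fun ε : ℝ => ε ^ (2 * j) :=
      isBigO_of_le _ fun ε => by simp [pow_mul]
    have hle : (fun ε : ℝ => ε ^ (2 * j) * ε ^ (m + 1)) =O[𝓝[>] 0] fun ε => ε ^ (j + m) := by
      simp only [← pow_add]
      exact pow_isBigO_pow_nhdsGT_zero (by omega)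
    exact (hpow.mul (integral_negPowMul_sub_regInt_isBigO
      (contDiff_infty.1 (contDiff_taylorCoeff hv j) _) hR (hcoeffR j))).trans hle
  refine ((integral_sub_sum_integral_negPowMul_isBigO hv hR M).add
    (IsBigO.fun_sum hterm)).congr_left fun ε => ?_
  simp only [mul_sub, Finset.sum_sub_distrib]
  ring

lemma pow_mul_zpowPrimitive_add_swap {ε : ℝ} (hε : ε ≠ 0) (j k : ℕ) :
    ((ε ^ 2 : ℝ) : ℂ) ^ j * zpowPrimitive ((k : ℤ) - j) ε +
        ((ε ^ 2 : ℝ) : ℂ) ^ k * zpowPrimitive ((j : ℤ) - k) ε =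
      if j = k then ((ε ^ 2 : ℝ) : ℂ) ^ j * (Real.log (ε ^ 2) : ℂ) else 0 := by
  have hε0 : (ε : ℂ) ≠ 0 := Complex.ofReal_ne_zero.2 hε
  have hpow (i l : ℕ) : ((ε ^ 2 : ℝ) : ℂ) ^ i * (ε : ℂ) ^ ((l : ℤ) - i) = (ε : ℂ) ^ (i + l) := by
    rw [Complex.ofReal_pow, ← pow_mul, ← zpow_natCast, ← zpow_add₀ hε0, ← zpow_natCast]
    congr 1
    push_cast
    ring
  split_ifs with hjk
  · subst hjk
    simp only [zpowPrimitive, sub_self, if_true, Real.log_pow]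
    push_cast
    ring
  · have hkj : (k : ℤ) - j ≠ 0 := by omega
    have hjk' : (j : ℤ) - k ≠ 0 := by omega
    rw [zpowPrimitive, zpowPrimitive, if_neg hkj, if_neg hjk', ← mul_div_assoc, ← mul_div_assoc,
      hpow, hpow, add_comm k j, ← neg_sub (k : ℤ) j, Int.cast_neg, div_neg, add_neg_cancel]

lemma sum_pow_mul_zpowPrimitive_add_swap {ε : ℝ} (hε : ε ≠ 0) (e : ℕ → ℕ → ℂ) (M : ℕ) :
    ∑ j ∈ Finset.range M, ((ε ^ 2 : ℝ) : ℂ) ^ j *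
        ∑ k ∈ Finset.range M, e j k * zpowPrimitive ((k : ℤ) - j) ε +
      ∑ j ∈ Finset.range M, ((ε ^ 2 : ℝ) : ℂ) ^ j *
        ∑ k ∈ Finset.range M, e k j * zpowPrimitive ((k : ℤ) - j) ε =
      ∑ j ∈ Finset.range M, ((ε ^ 2 : ℝ) : ℂ) ^ j * (e j j * (Real.log (ε ^ 2) : ℂ)) := by
  simp only [Finset.mul_sum]
  rw [Finset.sum_comm (f := fun j k => ((ε ^ 2 : ℝ) : ℂ) ^ j *
    (e k j * zpowPrimitive ((k : ℤ) - j) ε)), ← Finset.sum_add_distrib]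
  refine Finset.sum_congr rfl fun j hj => ?_
  calc _ = ∑ k ∈ Finset.range M, e j k *
          if j = k then ((ε ^ 2 : ℝ) : ℂ) ^ j * (Real.log (ε ^ 2) : ℂ) else 0 := by
        rw [← Finset.sum_add_distrib]
        refine Finset.sum_congr rfl fun k _ => ?_
        rw [← pow_mul_zpowPrimitive_add_swap hε]
        ring
    _ = _ := by
        simp only [mul_ite, mul_zero, Finset.sum_ite_eq, if_pos hj]
        ring

/-- The term `t ^ j * (a_j + b_j - c_j * log t)` of the expansion of the push-forward of `u`, with
`a_j` written, after the substitution `y = 1 / ζ`, as the coefficient `b_j` of the transpose of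
`u`. -/
def expansionTerm (u : ℝ → ℝ → ℂ) (j : ℕ) (t : ℝ) : ℂ :=
  (t : ℂ) ^ j * (regInt (negPowMul j fun y => taylorCoeff (fun x => u x y) j) +
    regInt (negPowMul j fun x => taylorCoeff (u x) j) -
    taylorCoeff (fun x => taylorCoeff (u x) j) j * (Real.log t : ℂ))

lemma sum_expansionTerm_sq (hu : ContDiff ℝ ∞ (Function.uncurry u)) {ε : ℝ} (hε : ε ≠ 0)
    (M : ℕ) :
    ∑ j ∈ Finset.range M, expansionTerm u j (ε ^ 2) =
      ∑ j ∈ Finset.range M, ((ε ^ 2 : ℝ) : ℂ) ^ j *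
        (regInt (negPowMul j fun x => taylorCoeff (u x) j) - ∑ k ∈ Finset.range M,
          taylorCoeff (fun x => taylorCoeff (u x) j) k * zpowPrimitive ((k : ℤ) - j) ε) +
      ∑ j ∈ Finset.range M, ((ε ^ 2 : ℝ) : ℂ) ^ j *
        (regInt (negPowMul j fun y => taylorCoeff (fun x => u x y) j) - ∑ k ∈ Finset.range M,
          taylorCoeff (fun y => taylorCoeff (fun x => u x y) j) k *
            zpowPrimitive ((k : ℤ) - j) ε) := by
  have hdiag := sum_pow_mul_zpowPrimitive_add_swap hε
    (fun j k => taylorCoeff (fun x => taylorCoeff (u x) j) k) M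
  simp only [expansionTerm, taylorCoeff_taylorCoeff_comm hu, mul_sub, mul_add,
    Finset.sum_sub_distrib, Finset.sum_add_distrib]
  rw [← hdiag]
  ring

theorem pushforward_sq_sub_sum_isBigO (hu : ContDiff ℝ ∞ (Function.uncurry u)) (hR : 0 < R)
    (hux : ∀ x y, R ≤ x → u x y = 0) (huy : ∀ x y, R ≤ y → u x y = 0) (M : ℕ) :
    (fun ε : ℝ => pushforward u (ε ^ 2) - ∑ j ∈ Finset.range (M + 1), expansionTerm u j (ε ^ 2))
      =O[𝓝[>] 0] fun ε => ε ^ M := by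
  have hswap : ContDiff ℝ ∞ (Function.uncurry fun y x => u x y) :=
    hu.comp (contDiff_snd.prodMk contDiff_fst)
  refine ((integral_comp_sq_div_sub_sum_isBigO hu hR hux M).add
    (integral_comp_sq_div_sub_sum_isBigO hswap hR (fun y x => huy x y) M)).congr' ?_ .rfl
  filter_upwards [Ioo_mem_nhdsGT hR] with ε hε
  rw [pushforward_sq_eq_add hu.continuous hR hux huy hε.1 hε.2.le,
    sum_expansionTerm_sq hu hε.1.ne']
  ring

lemma expansionTerm_isBigO (u : ℝ → ℝ → ℂ) {N j : ℕ} (hj : N ≤ j) :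
    expansionTerm u j =O[𝓝[>] 0] fun t => t ^ N * (1 + |Real.log t|) := by
  have hpow : (fun t : ℝ => (t : ℂ) ^ j) =O[𝓝[>] 0] fun t : ℝ => t ^ N :=
    (isBigO_of_le (g := fun t : ℝ => t ^ j) _ fun t => by simp).trans
      (pow_isBigO_pow_nhdsGT_zero hj)
  refine hpow.mul (.sub ?_ ?_)
  · exact (isBigO_const_const _ (one_ne_zero (α := ℝ)) _).trans
      (isBigO_of_le _ fun t => by
        rw [norm_one, Real.norm_of_nonneg (by positivity)]
        exact le_add_of_nonneg_right (abs_nonneg _))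
  · exact .const_mul_left (isBigO_of_le _ fun t => by
      rw [Complex.norm_real, Real.norm_eq_abs, Real.norm_of_nonneg (by positivity)]
      exact le_add_of_nonneg_left zero_le_one) _

theorem pushforward_sub_sum_isBigO (hu : ContDiff ℝ ∞ (Function.uncurry u)) (hR : 0 < R)
    (hux : ∀ x y, R ≤ x → u x y = 0) (huy : ∀ x y, R ≤ y → u x y = 0) (N : ℕ) :
    (fun t => pushforward u t - ∑ j ∈ Finset.range N, expansionTerm u j t)
      =O[𝓝[>] 0] fun t => t ^ N * (1 + |Real.log t|) := by
  have hsqrt : Tendsto Real.sqrt (𝓝[>] 0) (𝓝[>] 0) :=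
    tendsto_nhdsWithin_of_tendsto_nhds_of_eventually_within _
      (Real.continuous_sqrt.tendsto' 0 0 Real.sqrt_zero |>.mono_left nhdsWithin_le_nhds)
      (eventually_mem_nhdsWithin.mono fun t ht => Real.sqrt_pos.2 ht)
  have hlong : (fun t => pushforward u t - ∑ j ∈ Finset.range (2 * N + 1), expansionTerm u j t)
      =O[𝓝[>] 0] fun t => t ^ N := by
    refine ((pushforward_sq_sub_sum_isBigO hu hR hux huy (2 * N)).comp_tendsto hsqrt).congr' ?_ ?_
    all_goals
      filter_upwards [self_mem_nhdsWithin] with t ht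
      simp only [Function.comp_apply, pow_mul, Real.sq_sqrt (mem_Ioi.1 ht).le]
  have htail : (fun t => ∑ j ∈ Finset.Ico N (2 * N + 1), expansionTerm u j t)
      =O[𝓝[>] 0] fun t => t ^ N * (1 + |Real.log t|) :=
    IsBigO.fun_sum fun j hj => expansionTerm_isBigO u (Finset.mem_Ico.1 hj).1
  have hlog : (fun t : ℝ => t ^ N) =O[𝓝[>] 0] fun t => t ^ N * (1 + |Real.log t|) :=
    isBigO_of_le _ fun t => by
      rw [norm_mul]
      refine le_mul_of_one_le_right (norm_nonneg _) (le_trans ?_ (le_abs_self _))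
      exact le_add_of_nonneg_right (abs_nonneg _)
  refine ((hlong.trans hlog).add htail).congr_left fun t => ?_
  rw [← Finset.sum_range_add_sum_Ico _ (show N ≤ 2 * N + 1 by omega)]
  ring

lemma expansionTerm_eq_iteratedDeriv (hu : ContDiff ℝ ∞ (Function.uncurry u)) (hR : 0 < R)
    (huy : ∀ x y, R ≤ y → u x y = 0) (j : ℕ) (t : ℝ) :
    expansionTerm u j t = (t : ℂ) ^ j *
      ((regInt fun ζ : ℝ => (ζ : ℂ) ^ ((j : ℤ) - 1) / (j.factorial : ℂ) *
          iteratedDeriv j (fun x => u x (1 / ζ)) 0) +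
        (regInt fun x : ℝ => (x : ℂ) ^ (-1 - (j : ℤ)) / (j.factorial : ℂ) *
          iteratedDeriv j (fun y => u x y) 0) -
        (1 / (j.factorial : ℂ) ^ 2) *
          iteratedDeriv j (fun x => iteratedDeriv j (fun y => u x y) 0) 0 *
            (Real.log t : ℂ)) := by
  have hswap : ContDiff ℝ ∞ (Function.uncurry fun y x => u x y) :=
    hu.comp (contDiff_snd.prodMk contDiff_fst)
  have hcoeffR (y : ℝ) (hy : R ≤ y) : taylorCoeff (fun x => u x y) j = 0 := by
    simp [taylorCoeff, huy _ y hy]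
  have hfst : regInt (negPowMul j fun y => taylorCoeff (fun x => u x y) j) =
      regInt fun ζ : ℝ => (ζ : ℂ) ^ ((j : ℤ) - 1) / (j.factorial : ℂ) *
        iteratedDeriv j (fun x => u x (1 / ζ)) 0 := by
    rw [← regInt_zpow_mul_comp_inv (contDiff_taylorCoeff hswap j) hR hcoeffR]
    refine congrArg regInt (funext fun ζ => ?_)
    rw [taylorCoeff, one_div, div_mul_eq_mul_div, mul_div_assoc]
  have hsnd : (negPowMul j fun x => taylorCoeff (u x) j) = fun x : ℝ =>
      (x : ℂ) ^ (-1 - (j : ℤ)) / (j.factorial : ℂ) * iteratedDeriv j (fun y => u x y) 0 :=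
    funext fun x => by rw [negPowMul, taylorCoeff, div_mul_eq_mul_div, mul_div_assoc]
  rw [expansionTerm, hfst, hsnd]
  simp only [taylorCoeff, iteratedDeriv_div_const]
  ring

end Pushforward

/-- **Complete asymptotic expansion of the push-forward under `f(x,y) = xy` of a
smooth compactly supported density.**  For smooth compactly supported `u`, with
`a_j = ⨍_0^∞ (ζ^{j-1}/j!) ∂_1^j u(0, 1/ζ) dζ`,
`b_j = ⨍_0^∞ (x^{-1-j}/j!) ∂_2^j u(x, 0) dx` and
`c_j = (1/(j!)²) ∂_1^j ∂_2^j u(0,0)`, the push-forward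
`(f_* u)(t) = ∫_0^∞ u(x, t/x)(1/x) dx` satisfies
`f_* u(t) ∼ Σ_{j ≥ 0} t^j (a_j + b_j - c_j log t)` as `t → 0⁺`. -/
theorem pushforward_smooth_asymptotics (u : ℝ → ℝ → ℂ)
    (hu : ContDiff ℝ (⊤ : ℕ∞) (Function.uncurry u))
    (hsupp : HasCompactSupport (Function.uncurry u)) :
    ∀ N : ℕ, ∃ C > 0, ∃ t₀ ∈ Ioo (0:ℝ) 1, ∀ t : ℝ, 0 < t → t < t₀ →
      ‖(∫ x in Ioi (0:ℝ), u x (t / x) * (1 / (x : ℂ)))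
        - ∑ j ∈ Finset.range N, (t : ℂ) ^ (j : ℕ) *
          ((regInt fun ζ : ℝ => (ζ : ℂ) ^ ((j : ℤ) - 1) / (j.factorial : ℂ) *
              iteratedDeriv j (fun x => u x (1 / ζ)) 0)
            + (regInt fun x : ℝ => (x : ℂ) ^ (-1 - (j : ℤ)) / (j.factorial : ℂ) *
              iteratedDeriv j (fun y => u x y) 0)
            - (1 / ((j.factorial : ℂ)) ^ 2) *
              iteratedDeriv j (fun x => iteratedDeriv j (fun y => u x y) 0) 0 *
                (Real.log t : ℂ))‖
      ≤ C * t ^ (N : ℕ) * (1 + |Real.log t|) := by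
  intro N
  obtain ⟨R, hR, hux, huy⟩ := exists_forall_le_eq_zero hsupp
  obtain ⟨C, hC, hO⟩ := (pushforward_sub_sum_isBigO hu hR hux huy N).exists_pos
  obtain ⟨δ, hδ, hsub⟩ := mem_nhdsGT_iff_exists_Ioo_subset.1 hO.bound
  refine ⟨C, hC, min δ (1 / 2), ⟨lt_min hδ one_half_pos, ?_⟩, fun t ht htδ => ?_⟩
  · exact (min_le_right δ _).trans_lt one_half_lt_one
  have hbound : ‖pushforward u t - ∑ j ∈ Finset.range N, expansionTerm u j t‖
      ≤ C * ‖t ^ N * (1 + |Real.log t|)‖ := hsub ⟨ht, htδ.trans_le (min_le_left _ _)⟩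
  rw [Real.norm_of_nonneg (by positivity), ← mul_assoc] at hbound
  simpa only [pushforward, expansionTerm_eq_iteratedDeriv hu hR huy] using hbound

end
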